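/- arXiv:1111.1041 — 4 statements merged into one kernel-verified Lean document; each statement's English description precedes it below -/
import Mathlib

section
/- Let B ≥ 1 and let X_B be a chi-square random variable with B degrees of freedom. Define h(τ²) = τ / E[(√X_B − τ)·1{X_B ≥ τ²}] and g(τ²) = τ·E[(√X_B − τ)²·1{X_B ≥ τ²}] / E[(√X_B − τ)·1{X_B ≥ τ²}]. Then for every τ ∈ [0,∞), setting ε = 1/(1 + h(τ²)), the minimax MSE of block soft thresholding satisfies M_B(ε|BlockSoft) = (B + τ² + g(τ²)) / (B(1 + h(τ²))). -/
open MeasureTheory ProbabilityTheory ENNReal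

noncomputable section

/-- The standard Gaussian measure `N(0, I_B)` on `ℝ^B`. -/
def stdGaussian (B : ℕ) : Measure (Fin B → ℝ) :=
  Measure.pi fun _ => gaussianReal 0 1

/-- Block soft thresholding `η^soft(y;τ) = (1 - τ/‖y‖₂)₊ · y` on `ℝ^B`
(with `η^soft(0;τ) = 0`). -/
def blockSoft (B : ℕ) (τ : ℝ) (y : Fin B → ℝ) : Fin B → ℝ :=
  (max (1 - τ / Real.sqrt (∑ i, (y i) ^ 2)) 0) • y

/-- The class `F_{ε,B}` of Borel probability measures `ν` on `ℝ^B` with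
`ν({0}) ≥ 1 - ε`. -/
def sparseClass (B : ℕ) (ε : ℝ) : Set (Measure (Fin B → ℝ)) :=
  {ν | IsProbabilityMeasure ν ∧ ENNReal.ofReal (1 - ε) ≤ ν {0}}

/-- The minimax MSE of block soft thresholding,
`M_B(ε|BlockSoft) = (1/B) inf_{τ ≥ 0} sup_{ν ∈ F_{ε,B}} E ‖X - η^soft(X+Z;τ)‖₂²`,
with `X ∼ ν` and `Z ∼ N(0,I_B)` independent. -/
def MBlockSoft (B : ℕ) (ε : ℝ) : ℝ≥0∞ :=
  (B : ℝ≥0∞)⁻¹ *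
    ⨅ (τ : ℝ) (_ : 0 ≤ τ), ⨆ ν ∈ sparseClass B ε,
      ∫⁻ p, ENNReal.ofReal (∑ i, (p.1 i - blockSoft B τ (p.1 + p.2) i) ^ 2)
        ∂(ν.prod (stdGaussian B))

/-- `E[(√X_B − τ)·1{X_B ≥ τ²}]`, with `X_B = ‖Z‖₂²` a chi-square with `B`
degrees of freedom. -/
def Eind1 (B : ℕ) (τ : ℝ) : ℝ :=
  ∫ z, (if τ ^ 2 ≤ ∑ i, (z i) ^ 2 then Real.sqrt (∑ i, (z i) ^ 2) - τ else 0)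
    ∂(stdGaussian B)

/-- `E[(√X_B − τ)²·1{X_B ≥ τ²}]`, with `X_B` a chi-square with `B` degrees of
freedom. -/
def Eind2 (B : ℕ) (τ : ℝ) : ℝ :=
  ∫ z, (if τ ^ 2 ≤ ∑ i, (z i) ^ 2 then (Real.sqrt (∑ i, (z i) ^ 2) - τ) ^ 2 else 0)
    ∂(stdGaussian B)

/-- `h(τ²) = τ / E[(√X_B − τ)·1{X_B ≥ τ²}]`. -/
def hfun (B : ℕ) (τ : ℝ) : ℝ := τ / Eind1 B τ

/-- `g(τ²) = τ·E[(√X_B − τ)²·1{X_B ≥ τ²}] / E[(√X_B − τ)·1{X_B ≥ τ²}]`. -/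
def gfun (B : ℕ) (τ : ℝ) : ℝ := τ * Eind2 B τ / Eind1 B τ

/-! ### Pointwise facts -/

/-- Euclidean norm on `Fin B → ℝ`. -/
def nrm {B : ℕ} (y : Fin B → ℝ) : ℝ := Real.sqrt (∑ i, (y i) ^ 2)

lemma nrm_nonneg {B : ℕ} (y : Fin B → ℝ) : 0 ≤ nrm y := Real.sqrt_nonneg _

lemma nrm_sq {B : ℕ} (y : Fin B → ℝ) : nrm y ^ 2 = ∑ i, (y i) ^ 2 :=
  Real.sq_sqrt (Finset.sum_nonneg fun _ _ => sq_nonneg _)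

/-- The coefficient of the projection onto the ball of radius `σ`. -/
def cf {B : ℕ} (σ : ℝ) (y : Fin B → ℝ) : ℝ := 1 - max (1 - σ / nrm y) 0

lemma blockSoft_apply {B : ℕ} (σ : ℝ) (y : Fin B → ℝ) (i : Fin B) :
    blockSoft B σ y i = (1 - cf σ y) * y i := by
  simp [blockSoft, cf, nrm]

lemma cf_nonneg {B : ℕ} {σ : ℝ} (hσ : 0 ≤ σ) (y : Fin B → ℝ) : 0 ≤ cf σ y := by
  unfold cf
  have : 0 ≤ σ / nrm y := div_nonneg hσ (nrm_nonneg y)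
  have : max (1 - σ / nrm y) 0 ≤ 1 := max_le (by linarith) zero_le_one
  linarith

lemma cf_mul {B : ℕ} {σ : ℝ} (hσ : 0 ≤ σ) (y : Fin B → ℝ) :
    cf σ y * nrm y = min (nrm y) σ := by
  unfold cf
  rcases (nrm_nonneg y).eq_or_lt with h | h
  · rw [← h]; simp [hσ]
  · rcases le_total σ (nrm y) with h1 | h1
    · have : σ / nrm y ≤ 1 := (div_le_one h).2 h1
      rw [max_eq_left (by linarith), min_eq_right h1]
      field_simp
      ring
    · have : 1 ≤ σ / nrm y := (one_le_div h).2 h1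
      rw [max_eq_right (by linarith), min_eq_left h1]
      ring

lemma cf_mono {B : ℕ} {σ : ℝ} (hσ : 0 ≤ σ) (a b : Fin B → ℝ) :
    0 ≤ ∑ i, (a i - b i) * (cf σ a * a i - cf σ b * b i) := by
  have e : ∑ i, (a i - b i) * (cf σ a * a i - cf σ b * b i)
      = cf σ a * nrm a ^ 2 + cf σ b * nrm b ^ 2 - (cf σ a + cf σ b) * ∑ i, a i * b i := by
    rw [nrm_sq, nrm_sq, Finset.mul_sum, Finset.mul_sum, Finset.mul_sum, ← Finset.sum_add_distrib,
      ← Finset.sum_sub_distrib]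
    refine Finset.sum_congr rfl fun i _ => ?_
    ring
  have cs : ∑ i, a i * b i ≤ nrm a * nrm b := Real.sum_mul_le_sqrt_mul_sqrt _ _ _
  have h1 := mul_le_mul_of_nonneg_left cs (add_nonneg (cf_nonneg hσ a) (cf_nonneg hσ b))
  have h2 : 0 ≤ (nrm a - nrm b) * (cf σ a * nrm a - cf σ b * nrm b) := by
    rw [cf_mul hσ, cf_mul hσ]
    rcases le_total (nrm a) (nrm b) with h | h
    · have := min_le_min_right σ h
      exact mul_nonneg_of_nonpos_of_nonpos (by linarith) (by linarith)
    · have := min_le_min_right σ h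
      exact mul_nonneg (by linarith) (by linarith)
  rw [e]
  nlinarith

lemma pt_upper {B : ℕ} {σ : ℝ} (hσ : 0 ≤ σ) (m z : Fin B → ℝ) :
    ∑ i, (m i - blockSoft B σ (m + z) i) ^ 2
      ≤ ∑ i, (z i) ^ 2 + σ ^ 2 - 2 * ∑ i, (cf σ m * m i) * z i := by
  set y := m + z with hy
  have e : ∑ i, (m i - blockSoft B σ y i) ^ 2
      = (cf σ y * nrm y) ^ 2 + ∑ i, (z i) ^ 2 - 2 * ∑ i, (cf σ m * m i) * z i
        - 2 * ∑ i, (y i - m i) * (cf σ y * y i - cf σ m * m i) := by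
    rw [mul_pow, nrm_sq, Finset.mul_sum, Finset.mul_sum, Finset.mul_sum,
      ← Finset.sum_add_distrib, ← Finset.sum_sub_distrib, ← Finset.sum_sub_distrib]
    refine Finset.sum_congr rfl fun i _ => ?_
    rw [blockSoft_apply]
    have : z i = y i - m i := by simp [hy]
    rw [this]; ring
  have h1 := cf_mono hσ y m
  have h2 : (cf σ y * nrm y) ^ 2 ≤ σ ^ 2 := by
    have h0 : 0 ≤ cf σ y * nrm y := mul_nonneg (cf_nonneg hσ y) (nrm_nonneg y)
    have : cf σ y * nrm y ≤ σ := by rw [cf_mul hσ]; exact min_le_right _ _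
    gcongr
  rw [e]; linarith

lemma pt_zero {B : ℕ} {σ : ℝ} (hσ : 0 ≤ σ) (z : Fin B → ℝ) :
    ∑ i, ((0 : Fin B → ℝ) i - blockSoft B σ (0 + z) i) ^ 2
      = (if σ ^ 2 ≤ ∑ i, (z i) ^ 2 then (Real.sqrt (∑ i, (z i) ^ 2) - σ) ^ 2 else 0) := by
  have e : ∑ i, ((0 : Fin B → ℝ) i - blockSoft B σ (0 + z) i) ^ 2
      = (nrm z - cf σ z * nrm z) ^ 2 := by
    have : (nrm z - cf σ z * nrm z) ^ 2 = (1 - cf σ z) ^ 2 * nrm z ^ 2 := by ring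
    rw [this, nrm_sq, Finset.mul_sum]
    refine Finset.sum_congr rfl fun i _ => ?_
    rw [zero_add, blockSoft_apply, Pi.zero_apply]; ring
  rw [e, cf_mul hσ, ← nrm_sq]
  have hn := nrm_nonneg z
  rw [Real.sqrt_sq hn]
  split_ifs with h
  · rw [min_eq_right (by nlinarith)]
  · rw [min_eq_left (by nlinarith)]; ring

lemma ite1_eq {B : ℕ} {σ : ℝ} (hσ : 0 ≤ σ) (z : Fin B → ℝ) :
    (if σ ^ 2 ≤ ∑ i, (z i) ^ 2 then Real.sqrt (∑ i, (z i) ^ 2) - σ else 0)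
      = max (nrm z - σ) 0 := by
  have hn := nrm_nonneg z
  rw [← nrm_sq, Real.sqrt_sq hn]
  split_ifs with h
  · rw [max_eq_left (by nlinarith)]
  · rw [max_eq_right (by nlinarith)]

lemma ite2_eq {B : ℕ} {σ : ℝ} (hσ : 0 ≤ σ) (z : Fin B → ℝ) :
    (if σ ^ 2 ≤ ∑ i, (z i) ^ 2 then (Real.sqrt (∑ i, (z i) ^ 2) - σ) ^ 2 else 0)
      = max (nrm z - σ) 0 ^ 2 := by
  have hn := nrm_nonneg z
  rw [← nrm_sq, Real.sqrt_sq hn]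
  split_ifs with h
  · rw [max_eq_left (by nlinarith)]
  · rw [max_eq_right (by nlinarith)]; ring

lemma pt_convex (r σ τ : ℝ) :
    max (r - τ) 0 ^ 2 - 2 * (σ - τ) * max (r - τ) 0 ≤ max (r - σ) 0 ^ 2 := by
  rcases le_total (r - τ) 0 with h | h
  · rw [max_eq_right h]; nlinarith [sq_nonneg (max (r - σ) 0)]
  · rw [max_eq_left h]
    rcases le_total (r - σ) 0 with h' | h'
    · rw [max_eq_right h']; nlinarith
    · rw [max_eq_left h']; nlinarith [sq_nonneg (σ - τ)]

/-! ### Gaussian facts -/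

instance stdGaussian_prob (B : ℕ) : IsProbabilityMeasure (stdGaussian B) := by
  unfold _root_.stdGaussian; infer_instance

@[fun_prop]
lemma measurable_nrm {B : ℕ} : Measurable (nrm (B := B)) := by
  unfold nrm; fun_prop

@[fun_prop]
lemma measurable_cf {B : ℕ} (σ : ℝ) : Measurable (cf (B := B) σ) := by
  unfold cf; fun_prop

lemma mp_eval {B : ℕ} (i : Fin B) :
    MeasurePreserving (fun z : Fin B → ℝ => z i) (stdGaussian B) (gaussianReal 0 1) :=
  measurePreserving_eval (fun _ : Fin B => gaussianReal 0 1) i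

lemma int_coord {B : ℕ} (i : Fin B) : Integrable (fun z : Fin B → ℝ => z i) (stdGaussian B) :=
  (mp_eval i).integrable_comp_of_integrable
    ((memLp_id_gaussianReal (μ := 0) (v := 1) 1).integrable (by simp))

lemma int_coord_sq {B : ℕ} (i : Fin B) :
    Integrable (fun z : Fin B → ℝ => z i ^ 2) (stdGaussian B) :=
  (mp_eval i).integrable_comp_of_integrable (g := fun x : ℝ => x ^ 2)
    ((memLp_id_gaussianReal (μ := 0) (v := 1) 2).integrable_sq)

lemma mean_coord {B : ℕ} (i : Fin B) : ∫ z, z i ∂(stdGaussian B) = 0 := by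
  have := integral_map (μ := _root_.stdGaussian B) (mp_eval i).measurable.aemeasurable
    (f := fun x : ℝ => x) (by fun_prop)
  rw [← this, (mp_eval i).map_eq]
  exact integral_id_gaussianReal

lemma var_coord {B : ℕ} (i : Fin B) : ∫ z, z i ^ 2 ∂(stdGaussian B) = 1 := by
  have := integral_map (μ := _root_.stdGaussian B) (mp_eval i).measurable.aemeasurable
    (f := fun x : ℝ => x ^ 2) (by fun_prop)
  rw [← this, (mp_eval i).map_eq]
  have h := variance_eq_sub (memLp_id_gaussianReal (μ := 0) (v := 1) 2)
  rw [variance_id_gaussianReal] at h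
  simpa using h.symm

lemma int_quad {B : ℕ} (s : ℝ) (a : Fin B → ℝ) :
    Integrable (fun z : Fin B → ℝ => ∑ i, (z i) ^ 2 + s - 2 * ∑ i, a i * z i) (stdGaussian B) :=
  ((integrable_finsetSum _ fun i _ => int_coord_sq i).add (integrable_const s)).sub
    ((integrable_finsetSum _ fun i _ => (int_coord i).const_mul (a i)).const_mul 2)

lemma integral_quad {B : ℕ} (s : ℝ) (a : Fin B → ℝ) :
    ∫ z, (∑ i, (z i) ^ 2 + s - 2 * ∑ i, a i * z i) ∂(stdGaussian B) = B + s := by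
  rw [integral_sub, integral_add, integral_const_mul, integral_finsetSum, integral_finsetSum]
  · simp [integral_const_mul, mean_coord, var_coord]
  · exact fun i _ => (int_coord i).const_mul (a i)
  · exact fun i _ => int_coord_sq i
  · exact integrable_finsetSum _ fun i _ => int_coord_sq i
  · exact integrable_const s
  · exact (integrable_finsetSum _ fun i _ => int_coord_sq i).add (integrable_const s)
  · exact (integrable_finsetSum _ fun i _ => (int_coord i).const_mul (a i)).const_mul 2

lemma int_pos2 {B : ℕ} {σ : ℝ} (hσ : 0 ≤ σ) :
    Integrable (fun z : Fin B → ℝ => max (nrm z - σ) 0 ^ 2) (stdGaussian B) := by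
  refine (integrable_finsetSum Finset.univ fun i _ => int_coord_sq (B := B) i).mono'
    (Measurable.aestronglyMeasurable (by fun_prop)) (Filter.Eventually.of_forall fun z => ?_)
  rw [Real.norm_of_nonneg (by positivity), ← nrm_sq]
  have := nrm_nonneg z
  exact pow_le_pow_left₀ (le_max_right _ _) (max_le (by linarith) this) 2

lemma int_pos1 {B : ℕ} {σ : ℝ} (hσ : 0 ≤ σ) :
    Integrable (fun z : Fin B → ℝ => max (nrm z - σ) 0) (stdGaussian B) := by
  refine ((int_pos2 (B := B) hσ).add (integrable_const 1)).mono'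
    (Measurable.aestronglyMeasurable (by fun_prop)) (Filter.Eventually.of_forall fun z => ?_)
  have h0 : 0 ≤ max (nrm z - σ) 0 := le_max_right _ _
  rw [Real.norm_of_nonneg h0]
  simp only [Pi.add_apply]
  nlinarith [sq_nonneg (max (nrm z - σ) 0 - 1)]

lemma Eind1_eq {B : ℕ} {σ : ℝ} (hσ : 0 ≤ σ) :
    Eind1 B σ = ∫ z, max (nrm z - σ) 0 ∂(stdGaussian B) := by
  simp only [Eind1, ite1_eq hσ]

lemma Eind2_eq {B : ℕ} {σ : ℝ} (hσ : 0 ≤ σ) :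
    Eind2 B σ = ∫ z, max (nrm z - σ) 0 ^ 2 ∂(stdGaussian B) := by
  simp only [Eind2, ite2_eq hσ]

lemma Eind2_nonneg {B : ℕ} {σ : ℝ} (hσ : 0 ≤ σ) : 0 ≤ Eind2 B σ := by
  rw [Eind2_eq hσ]; exact integral_nonneg fun z => by positivity

lemma Eind1_pos {B : ℕ} (hB : 1 ≤ B) {σ : ℝ} (hσ : 0 ≤ σ) : 0 < Eind1 B σ := by
  rw [Eind1_eq hσ, integral_pos_iff_support_of_nonneg
    (f := fun z : Fin B → ℝ => max (nrm z - σ) 0) (fun z => le_max_right (nrm z - σ) 0) (int_pos1 hσ)]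
  let i0 : Fin B := ⟨0, hB⟩
  have hsub : (fun z : Fin B → ℝ => z i0) ⁻¹' Set.Ioi σ ⊆
      Function.support (fun z : Fin B → ℝ => max (nrm z - σ) 0) := by
    intro z hz
    have hz' : σ < z i0 := hz
    have h1 : z i0 ≤ nrm z := by
      apply Real.le_sqrt_of_sq_le
      exact Finset.single_le_sum (f := fun i => z i ^ 2) (fun i _ => sq_nonneg _)
        (Finset.mem_univ i0)
    have : 0 < max (nrm z - σ) 0 := lt_max_of_lt_left (by linarith)
    exact this.ne'
  refine lt_of_lt_of_le ?_ (measure_mono hsub)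
  rw [(mp_eval i0).measure_preimage measurableSet_Ioi.nullMeasurableSet]
  rw [pos_iff_ne_zero]
  intro h
  have := gaussianReal_absolutelyContinuous' 0 (v := 1) one_ne_zero h
  simp at this

lemma Eind2_convex {B : ℕ} {σ τ : ℝ} (hσ : 0 ≤ σ) (hτ : 0 ≤ τ) :
    Eind2 B τ - 2 * (σ - τ) * Eind1 B τ ≤ Eind2 B σ := by
  rw [Eind2_eq hσ, Eind2_eq hτ, Eind1_eq hτ, ← integral_const_mul,
    ← integral_sub (int_pos2 hτ) ((int_pos1 hτ).const_mul _)]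
  exact integral_mono ((int_pos2 hτ).sub ((int_pos1 hτ).const_mul _)) (int_pos2 hσ)
    fun z => pt_convex _ _ _

/-! ### The risk -/

/-- Risk of block soft thresholding at a point. -/
def risk (B : ℕ) (σ : ℝ) (m : Fin B → ℝ) : ℝ≥0∞ :=
  ∫⁻ z, ENNReal.ofReal (∑ i, (m i - blockSoft B σ (m + z) i) ^ 2) ∂(stdGaussian B)

lemma measurable_integrand (B : ℕ) (σ : ℝ) :
    Measurable fun p : (Fin B → ℝ) × (Fin B → ℝ) =>
      ENNReal.ofReal (∑ i, (p.1 i - blockSoft B σ (p.1 + p.2) i) ^ 2) := by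
  simp only [blockSoft_apply]
  have h : Measurable fun p : (Fin B → ℝ) × (Fin B → ℝ) => cf σ (p.1 + p.2) :=
    (measurable_cf σ).comp (measurable_fst.add measurable_snd)
  simp only [Pi.add_apply]
  fun_prop

lemma measurable_risk (B : ℕ) (σ : ℝ) : Measurable (risk B σ) :=
  (measurable_integrand B σ).lintegral_prod_right'

lemma lintegral_eq_risk (B : ℕ) (σ : ℝ) (ν : Measure (Fin B → ℝ)) :
    ∫⁻ p, ENNReal.ofReal (∑ i, (p.1 i - blockSoft B σ (p.1 + p.2) i) ^ 2)
        ∂(ν.prod (stdGaussian B)) = ∫⁻ m, risk B σ m ∂ν :=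
  lintegral_prod _ (measurable_integrand B σ).aemeasurable

lemma risk_zero {B : ℕ} {σ : ℝ} (hσ : 0 ≤ σ) :
    risk B σ 0 = ENNReal.ofReal (Eind2 B σ) := by
  simp only [risk, pt_zero hσ, ite2_eq hσ]
  rw [Eind2_eq hσ, ofReal_integral_eq_lintegral_ofReal (int_pos2 hσ)
    (Filter.Eventually.of_forall fun z => by positivity)]

lemma risk_le {B : ℕ} {σ : ℝ} (hσ : 0 ≤ σ) (m : Fin B → ℝ) :
    risk B σ m ≤ ENNReal.ofReal (B + σ ^ 2) := by
  rw [← integral_quad (σ ^ 2) (fun i => cf σ m * m i),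
    ofReal_integral_eq_lintegral_ofReal (int_quad _ _)
    (Filter.Eventually.of_forall fun z => le_trans
      (Finset.sum_nonneg fun _ _ => sq_nonneg _) (pt_upper hσ m z))]
  exact lintegral_mono fun z => ENNReal.ofReal_le_ofReal (pt_upper hσ m z)

lemma Eind2_le {B : ℕ} {σ : ℝ} (hσ : 0 ≤ σ) : Eind2 B σ ≤ B + σ ^ 2 := by
  have h := risk_le hσ (0 : Fin B → ℝ)
  rw [risk_zero hσ] at h
  exact (ENNReal.ofReal_le_ofReal_iff (by positivity)).1 h

lemma nrm_single {B : ℕ} (i0 : Fin B) : nrm (Pi.single i0 (1 : ℝ)) = 1 := by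
  simp [nrm, Pi.single_apply]

lemma nrm_smul {B : ℕ} {t : ℝ} (ht : 0 ≤ t) (y : Fin B → ℝ) : nrm (t • y) = t * nrm y := by
  simp only [nrm, Pi.smul_apply, smul_eq_mul, mul_pow, ← Finset.mul_sum]
  rw [Real.sqrt_mul (sq_nonneg t), Real.sqrt_sq ht]

lemma continuous_nrm {B : ℕ} : Continuous (nrm (B := B)) := by
  unfold nrm; fun_prop

open Filter Topology in
lemma tendsto_far {B : ℕ} {σ : ℝ} (hσ : 0 ≤ σ) (i0 : Fin B) (z : Fin B → ℝ) :
    Tendsto (fun n : ℕ => ∑ i, (((n : ℝ) • (Pi.single i0 1 : Fin B → ℝ)) i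
        - blockSoft B σ ((n : ℝ) • (Pi.single i0 1 : Fin B → ℝ) + z) i) ^ 2) atTop
      (𝓝 (∑ i, (σ * (Pi.single i0 1 : Fin B → ℝ) i - z i) ^ 2)) := by
  set e : Fin B → ℝ := Pi.single i0 1 with he
  let w : ℕ → Fin B → ℝ := fun n => e + ((n : ℝ)⁻¹) • z
  have hw : Tendsto w atTop (𝓝 e) := by
    have h1 : Tendsto (fun n : ℕ => ((n : ℝ)⁻¹) • z) atTop (𝓝 ((0 : ℝ) • z)) :=
      (tendsto_inv_atTop_nhds_zero_nat (𝕜 := ℝ)).smul_const z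
    simpa [w] using (tendsto_const_nhds (x := e)).add h1
  have hn : Tendsto (fun n => nrm (w n)) atTop (𝓝 1) := by
    rw [← nrm_single i0]; exact (continuous_nrm.tendsto _).comp hw
  have hlim : Tendsto (fun n => ∑ i, (σ * (w n i / nrm (w n)) - z i) ^ 2) atTop
      (𝓝 (∑ i, (σ * (e i / 1) - z i) ^ 2)) := by
    refine tendsto_finsetSum _ fun i _ => ?_
    have hi : Tendsto (fun n => w n i) atTop (𝓝 (e i)) := ((continuous_apply i).tendsto _).comp hw
    exact (((hi.div hn one_ne_zero).const_mul σ).sub_const (z i)).pow 2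
  simp only [div_one] at hlim
  refine hlim.congr' ?_
  have hbig : Tendsto (fun n : ℕ => (n : ℝ) * nrm (w n)) atTop atTop :=
    (tendsto_natCast_atTop_atTop (R := ℝ)).atTop_mul_pos one_pos hn
  filter_upwards [hbig.eventually_ge_atTop σ, hn.eventually_const_lt (u := 1 / 2) (by norm_num),
    eventually_gt_atTop 0] with n h1 h2 h3
  have hnpos : (0 : ℝ) < n := by exact_mod_cast h3
  have hwpos : 0 < nrm (w n) := by linarith
  have hy : (n : ℝ) • e + z = (n : ℝ) • w n := by
    simp only [w, smul_add, smul_smul]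
    rw [mul_inv_cancel₀ hnpos.ne', one_smul]
  have hc := cf_mul hσ ((n : ℝ) • e + z)
  have hny : nrm ((n : ℝ) • e + z) = n * nrm (w n) := by rw [hy, nrm_smul hnpos.le]
  rw [hny, min_eq_right h1] at hc
  refine Finset.sum_congr rfl fun i _ => ?_
  rw [blockSoft_apply]
  have hyi : ((n : ℝ) • e) i + z i = n * w n i := by
    have := congrFun hy i
    simpa using this
  have key : cf σ ((n : ℝ) • e + z) * (n * w n i) = σ * (w n i / nrm (w n)) := by
    rw [mul_div_assoc', eq_div_iff hwpos.ne']
    linear_combination (w n i) * hc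
  rw [Pi.add_apply, sub_mul, one_mul, hyi, key, ← hyi]
  ring

open Filter Topology in
lemma le_iSup_risk {B : ℕ} {σ : ℝ} (hσ : 0 ≤ σ) (i0 : Fin B) :
    ENNReal.ofReal (B + σ ^ 2) ≤
      ⨆ n : ℕ, risk B σ ((n : ℝ) • (Pi.single i0 1 : Fin B → ℝ)) := by
  have hpt : ∀ z : Fin B → ℝ, ∑ i, (σ * (Pi.single i0 1 : Fin B → ℝ) i - z i) ^ 2
      = ∑ i, (z i) ^ 2 + σ ^ 2 - 2 * ∑ i, (σ * (Pi.single i0 1 : Fin B → ℝ) i) * z i := by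
    intro z
    have : σ ^ 2 = ∑ i, σ ^ 2 * ((Pi.single i0 1 : Fin B → ℝ) i) ^ 2 := by
      rw [← Finset.mul_sum, ← nrm_sq, nrm_single]; ring
    rw [this, Finset.mul_sum, ← Finset.sum_add_distrib, ← Finset.sum_sub_distrib]
    refine Finset.sum_congr rfl fun i _ => ?_
    ring
  have h1 : ENNReal.ofReal (B + σ ^ 2) = ∫⁻ z, ENNReal.ofReal
      (∑ i, (σ * (Pi.single i0 1 : Fin B → ℝ) i - z i) ^ 2) ∂(stdGaussian B) := by
    rw [← integral_quad (σ ^ 2) (fun i => σ * (Pi.single i0 1 : Fin B → ℝ) i),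
      ofReal_integral_eq_lintegral_ofReal (int_quad _ _)]
    · simp only [hpt]
    · refine Eventually.of_forall fun z => ?_
      simp only [← hpt]
      exact Finset.sum_nonneg fun _ _ => sq_nonneg _
  have h2 : ∀ z : Fin B → ℝ, ENNReal.ofReal
      (∑ i, (σ * (Pi.single i0 1 : Fin B → ℝ) i - z i) ^ 2) =
      liminf (fun n : ℕ => ENNReal.ofReal (∑ i, (((n : ℝ) • (Pi.single i0 1 : Fin B → ℝ)) i
        - blockSoft B σ ((n : ℝ) • (Pi.single i0 1 : Fin B → ℝ) + z) i) ^ 2)) atTop := fun z =>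
    (((ENNReal.continuous_ofReal.tendsto _).comp (tendsto_far hσ i0 z)).liminf_eq).symm
  rw [h1]
  simp only [h2]
  refine (lintegral_liminf_le fun n =>
    (measurable_integrand B σ).comp (measurable_const.prodMk measurable_id)).trans ?_
  exact liminf_le_of_le (by isBoundedDefault) fun b hb => by
    obtain ⟨n, hn⟩ := hb.exists
    exact hn.trans (le_iSup (fun n : ℕ => risk B σ ((n : ℝ) • (Pi.single i0 1 : Fin B → ℝ))) n)

lemma sup_risk {B : ℕ} (hB : 1 ≤ B) {σ ε : ℝ} (hσ : 0 ≤ σ) (h0 : 0 ≤ ε) (h1 : ε ≤ 1) :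
    (⨆ ν ∈ sparseClass B ε,
      ∫⁻ p, ENNReal.ofReal (∑ i, (p.1 i - blockSoft B σ (p.1 + p.2) i) ^ 2)
        ∂(ν.prod (stdGaussian B)))
    = ENNReal.ofReal ((1 - ε) * Eind2 B σ + ε * (B + σ ^ 2)) := by
  have hE0 := Eind2_nonneg (B := B) hσ
  have hE1 := Eind2_le (B := B) hσ
  have hM : (0 : ℝ) ≤ B + σ ^ 2 := by positivity
  simp only [lintegral_eq_risk]
  apply le_antisymm
  · refine iSup₂_le fun ν hν => ?_
    obtain ⟨hp, hν⟩ := hν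
    rw [← lintegral_add_compl _ (measurableSet_singleton (0 : Fin B → ℝ)),
      lintegral_singleton, risk_zero hσ]
    have hc : ∫⁻ m in ({0}ᶜ : Set (Fin B → ℝ)), risk B σ m ∂ν
        ≤ ENNReal.ofReal (B + σ ^ 2) * ν ({0}ᶜ) := by
      rw [← setLIntegral_const]
      exact lintegral_mono fun m => risk_le hσ m
    refine (add_le_add le_rfl hc).trans ?_
    rw [prob_compl_eq_one_sub (measurableSet_singleton _)]
    obtain ⟨q, hq0, hq⟩ : ∃ q : ℝ, 0 ≤ q ∧ ν {0} = ENNReal.ofReal q :=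
      ⟨(ν {0}).toReal, ENNReal.toReal_nonneg, (ENNReal.ofReal_toReal (measure_ne_top _ _)).symm⟩
    have hq1 : q ≤ 1 := by
      have : ν {0} ≤ 1 := prob_le_one
      rw [hq] at this
      exact ENNReal.ofReal_le_one.1 this
    rw [hq] at hν ⊢
    have hq2 : 1 - ε ≤ q := (ENNReal.ofReal_le_ofReal_iff hq0).1 hν
    rw [← ENNReal.ofReal_one, ← ENNReal.ofReal_sub _ hq0, ← ENNReal.ofReal_mul hE0,
      ← ENNReal.ofReal_mul hM, ← ENNReal.ofReal_add (by positivity)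
        (mul_nonneg hM (by linarith))]
    apply ENNReal.ofReal_le_ofReal
    nlinarith
  · let i0 : Fin B := ⟨0, hB⟩
    have hε : 0 ≤ 1 - ε := by linarith
    rw [ENNReal.ofReal_add (mul_nonneg hε hE0) (mul_nonneg h0 hM), ENNReal.ofReal_mul hε,
      ENNReal.ofReal_mul h0, ← risk_zero hσ]
    refine (add_le_add le_rfl (mul_le_mul_right (le_iSup_risk hσ i0) _)).trans ?_
    rw [ENNReal.mul_iSup, ENNReal.add_iSup]
    refine iSup_le fun n => ?_
    set m : Fin B → ℝ := (n : ℝ) • Pi.single i0 1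
    let ν : Measure (Fin B → ℝ) := ENNReal.ofReal (1 - ε) • Measure.dirac 0
      + ENNReal.ofReal ε • Measure.dirac m
    have hν : ν ∈ sparseClass B ε := by
      refine ⟨⟨?_⟩, ?_⟩
      · simp only [ν, Measure.add_apply, Measure.smul_apply, measure_univ, smul_eq_mul, mul_one]
        rw [← ENNReal.ofReal_add hε h0]; simp
      · simp only [ν, Measure.add_apply, Measure.smul_apply, smul_eq_mul]
        rw [Measure.dirac_apply' _ (measurableSet_singleton _)]
        simp
    refine le_trans (le_of_eq ?_) (le_iSup₂ (f := fun ν (_ : ν ∈ sparseClass B ε) =>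
      ∫⁻ m, risk B σ m ∂ν) ν hν)
    simp only [ν]
    rw [lintegral_add_measure, lintegral_smul_measure, lintegral_smul_measure,
      lintegral_dirac' _ (measurable_risk B σ), lintegral_dirac' _ (measurable_risk B σ)]
    simp

/-- **Minimax MSE of block soft thresholding (parametric formula).**
For every `τ ∈ [0,∞)`, setting `ε = 1/(1 + h(τ²))`, one has
`M_B(ε|BlockSoft) = (B + τ² + g(τ²)) / (B(1 + h(τ²)))`. -/
theorem blockSoft_minimax_formula (B : ℕ) (hB : 1 ≤ B) (τ : ℝ) (hτ : 0 ≤ τ) :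
    MBlockSoft B (1 / (1 + hfun B τ)) =
      ENNReal.ofReal ((B + τ ^ 2 + gfun B τ) / (B * (1 + hfun B τ))) := by
  have hE1 := Eind1_pos hB hτ
  have hh : 0 ≤ hfun B τ := div_nonneg hτ hE1.le
  have hh1 : 0 < 1 + hfun B τ := by linarith
  have hB0 : (0 : ℝ) < B := by exact_mod_cast hB
  set ε := 1 / (1 + hfun B τ) with hε
  have h0 : 0 ≤ ε := by positivity
  have h1 : ε ≤ 1 := by rw [hε, div_le_one hh1]; linarith
  have hεh : 1 - ε = ε * hfun B τ := by rw [hε]; field_simp; ring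
  have hst : (1 - ε) * Eind1 B τ = ε * τ := by
    rw [hεh, hfun]; field_simp
  have hg : gfun B τ = hfun B τ * Eind2 B τ := by rw [gfun, hfun]; ring
  have hval : (B + τ ^ 2 + gfun B τ) / (B * (1 + hfun B τ))
      = (B : ℝ)⁻¹ * ((1 - ε) * Eind2 B τ + ε * (B + τ ^ 2)) := by
    rw [hεh, hg, hε]; field_simp; ring
  rw [hval, ENNReal.ofReal_mul (by positivity), ENNReal.ofReal_inv_of_pos hB0,
    ENNReal.ofReal_natCast, MBlockSoft]
  congr 1
  apply le_antisymm
  · refine (iInf₂_le τ hτ).trans ?_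
    rw [sup_risk hB hτ h0 h1]
  · refine le_iInf₂ fun σ hσ => ?_
    rw [sup_risk hB hσ h0 h1]
    apply ENNReal.ofReal_le_ofReal
    have hc := mul_le_mul_of_nonneg_left (Eind2_convex (B := B) hσ hτ)
      (by linarith : 0 ≤ 1 - ε)
    have e : (1 - ε) * (Eind2 B τ - 2 * (σ - τ) * Eind1 B τ)
        = (1 - ε) * Eind2 B τ - 2 * (σ - τ) * (ε * τ) := by rw [← hst]; ring
    rw [e] at hc
    nlinarith [mul_nonneg h0 (sq_nonneg (σ - τ))]
end
end

section
/- Let B > 2 and let η^JS: ℝ^B → ℝ^B be the positive-part James–Stein estimator η^JS(y) = (1 − (B−2)/‖y‖₂²)₊ · y. Then the minimax MSE of James–Stein shrinkage over the class of ε-block-sparse distributions satisfies M_B(ε|JamesStein) = (1/B) sup_{ν∈F_{ε,B}} E ‖X − η^JS(X+Z)‖₂² ≤ ε + 2/B. -/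
open MeasureTheory ProbabilityTheory ENNReal

noncomputable section

/-- The positive-part James–Stein estimator
`η^JS(y) = (1 − (B−2)/‖y‖₂²)₊ · y` on `ℝ^B`. -/
def jamesStein (B : ℕ) (y : Fin B → ℝ) : Fin B → ℝ :=
  (max (1 - ((B : ℝ) - 2) / (∑ i, (y i) ^ 2)) 0) • y

open Filter Topology in
/-- One-dimensional Stein identity for bounded functions, differentiable off a countable set. -/
lemma stein_one_dim (h h' : ℝ → ℝ) (s : Set ℝ) (hs : s.Countable) (hc : Continuous h)
    (hd : ∀ x, x ∉ s → HasDerivAt h (h' x) x) (hm : Measurable h') (C : ℝ)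
    (hC : ∀ x, |h x| ≤ C) (hC' : ∀ x, |h' x| ≤ C) :
    ∫ x, x * h x ∂(gaussianReal 0 1) = ∫ x, h' x ∂(gaussianReal 0 1) := by
  have hq : ∀ x : ℝ, gaussianPDFReal 0 1 x =
      (√(2 * Real.pi))⁻¹ * Real.exp (-(1 / 2) * x ^ 2) := by
    intro x
    simp only [gaussianPDFReal, NNReal.coe_one, mul_one, sub_zero]
    congr 2
    ring
  set q : ℝ → ℝ := gaussianPDFReal 0 1 with hqdef
  have hqi : Integrable q := integrable_gaussianPDFReal 0 1
  have hqd : ∀ x, HasDerivAt q (-(x * q x)) x := by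
    intro x
    have h1 : HasDerivAt (fun x : ℝ => (√(2 * Real.pi))⁻¹ * Real.exp (-(1 / 2) * x ^ 2))
        ((√(2 * Real.pi))⁻¹ * (Real.exp (-(1 / 2) * x ^ 2) * (-(1 / 2) * (2 * x)))) x := by
      have := (((hasDerivAt_pow 2 x).const_mul (-(1 / 2 : ℝ))).exp).const_mul (√(2 * Real.pi))⁻¹
      simpa using this
    have h2 : q = fun x : ℝ => (√(2 * Real.pi))⁻¹ * Real.exp (-(1 / 2) * x ^ 2) := funext hq
    rw [h2]
    convert h1 using 1
    ring
  have hqc : Continuous q := continuous_iff_continuousAt.2 fun x => (hqd x).continuousAt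
  have hxq : Integrable (fun x : ℝ => x * q x) := by
    have := (integrable_mul_exp_neg_mul_sq (b := 1 / 2) (by norm_num)).const_mul (√(2 * Real.pi))⁻¹
    refine this.congr (ae_of_all _ fun x => ?_)
    simp only [hq]
    ring
  have i1 : Integrable (fun x => h' x * q x) :=
    hqi.bdd_mul (c := C) hm.aestronglyMeasurable (ae_of_all _ hC')
  have i2 : Integrable (fun x => h x * (x * q x)) :=
    hxq.bdd_mul (c := C) hc.aestronglyMeasurable (ae_of_all _ hC)
  have i3 : Integrable (fun x => h' x * q x + h x * (-(x * q x))) := by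
    refine (i1.sub i2).congr (ae_of_all _ fun x => ?_)
    simp only [Pi.sub_apply]
    ring
  have hF : ∀ R : ℝ, ∫ x in (-R)..R, (h' x * q x + h x * (-(x * q x))) =
      h R * q R - h (-R) * q (-R) := by
    intro R
    exact integral_eq_of_hasDerivAt_off_countable (fun x => h x * q x) _ hs
      (hc.mul hqc).continuousOn (fun x hx => (hd x hx.2).mul (hqd x)) i3.intervalIntegrable
  have t1 := intervalIntegral_tendsto_integral i3 tendsto_neg_atTop_atBot tendsto_id
  have hq0 : Tendsto q atTop (𝓝 0) := by
    have h2 : q = fun x : ℝ => (√(2 * Real.pi))⁻¹ * Real.exp (-(1 / 2) * x ^ 2) := funext hq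
    rw [h2, ← mul_zero (√(2 * Real.pi))⁻¹]
    refine Tendsto.const_mul _ (Real.tendsto_exp_atBot.comp ?_)
    exact (tendsto_pow_atTop two_ne_zero).const_mul_atTop_of_neg (by norm_num)
  have hqe : ∀ x, q (-x) = q x := by intro x; simp [hq]
  have hqn : ∀ x, 0 ≤ q x := gaussianPDFReal_nonneg 0 1
  have t2 : Tendsto (fun R : ℝ => h R * q R - h (-R) * q (-R)) atTop (𝓝 0) := by
    refine squeeze_zero_norm (a := fun R => (C + C) * q R) (fun R => ?_) ?_
    · rw [hqe, ← sub_mul, norm_mul, Real.norm_of_nonneg (hqn R)]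
      refine mul_le_mul_of_nonneg_right ?_ (hqn R)
      exact (norm_sub_le _ _).trans (add_le_add (hC _) (hC _))
    · simpa using hq0.const_mul (C + C)
  have key : ∫ x, (h' x * q x + h x * (-(x * q x))) = 0 :=
    tendsto_nhds_unique t1 (by simpa only [hF, id] using t2)
  rw [integral_gaussianReal_eq_integral_smul one_ne_zero,
    integral_gaussianReal_eq_integral_smul one_ne_zero]
  have e : ∫ x, (h' x * q x + h x * (-(x * q x))) =
      (∫ x, h' x * q x) - ∫ x, h x * (x * q x) := by
    rw [← integral_sub i1 i2]
    congr 1; ext x; ring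
  rw [e, sub_eq_zero] at key
  simp only [smul_eq_mul]
  calc _ = ∫ x, h x * (x * q x) := by congr 1; ext x; ring
    _ = ∫ x, h' x * q x := key.symm
    _ = _ := by congr 1; ext x; ring

/-- The shrinkage part `y - η(y)` in coordinate `i`. -/
def shr (c : ℝ) {B : ℕ} (y : Fin B → ℝ) (i : Fin B) : ℝ := y i * (c / max c (∑ j, y j ^ 2))

/-- Its `i`-th partial derivative. -/
def dshr (c : ℝ) {B : ℕ} (y : Fin B → ℝ) (i : Fin B) : ℝ :=
  if ∑ j, y j ^ 2 ≤ c then 1 else c / (∑ j, y j ^ 2) - 2 * c * y i ^ 2 / (∑ j, y j ^ 2) ^ 2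

lemma sq_le_S {B : ℕ} (y : Fin B → ℝ) (i : Fin B) : y i ^ 2 ≤ ∑ j, y j ^ 2 :=
  Finset.single_le_sum (f := fun j => y j ^ 2) (fun _ _ => sq_nonneg _) (Finset.mem_univ i)

lemma abs_shr_le {c : ℝ} (hc : 1 ≤ c) {B : ℕ} (y : Fin B → ℝ) (i : Fin B) :
    |shr c y i| ≤ c + 3 := by
  have h0 : 0 < max c (∑ j, y j ^ 2) := lt_max_of_lt_left (by linarith)
  have h1 := sq_le_S y i
  have h2 := le_max_left c (∑ j, y j ^ 2)
  have h3 := le_max_right c (∑ j, y j ^ 2)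
  unfold shr
  rw [abs_mul, abs_of_nonneg (a := c / _) (by positivity), ← mul_div_assoc, div_le_iff₀ h0]
  have h4 : |y i| ≤ max c (∑ j, y j ^ 2) := by
    rw [← sq_abs] at h1
    nlinarith [sq_nonneg (|y i| - 1)]
  nlinarith [abs_nonneg (y i)]

lemma abs_dshr_le {c : ℝ} (hc : 1 ≤ c) {B : ℕ} (y : Fin B → ℝ) (i : Fin B) :
    |dshr c y i| ≤ c + 3 := by
  have h1 := sq_le_S y i
  unfold dshr
  split_ifs with h
  · rw [abs_one]; linarith
  · push Not at h
    have hS : 0 < ∑ j, y j ^ 2 := by linarith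
    have a1 : c / (∑ j, y j ^ 2) ≤ 1 := by rw [div_le_one hS]; exact h.le
    have a2 : 0 ≤ c / (∑ j, y j ^ 2) := by positivity
    have a3 : 2 * c * y i ^ 2 / (∑ j, y j ^ 2) ^ 2 ≤ 2 := by
      rw [div_le_iff₀ (by positivity)]
      nlinarith [sq_nonneg (y i)]
    have a4 : 0 ≤ 2 * c * y i ^ 2 / (∑ j, y j ^ 2) ^ 2 := by positivity
    rw [abs_le]
    constructor <;> linarith

lemma continuous_shr {c : ℝ} (hc : 1 ≤ c) {B : ℕ} (i : Fin B) :
    Continuous fun y : Fin B → ℝ => shr c y i := by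
  unfold shr
  refine (continuous_apply i).mul (Continuous.div (by fun_prop) (by fun_prop) fun y => ?_)
  exact (lt_max_of_lt_left (by linarith)).ne'

lemma measurable_dshr {c : ℝ} {B : ℕ} (i : Fin B) :
    Measurable fun y : Fin B → ℝ => dshr c y i := by
  unfold dshr
  refine Measurable.ite (measurableSet_le (by fun_prop) (by fun_prop)) (by fun_prop) (by fun_prop)

/-- Insert the value `t` at position `i`. -/
abbrev ins {n : ℕ} (i : Fin (n + 1)) (t : ℝ) (w : Fin n → ℝ) : Fin (n + 1) → ℝ :=
  Fin.insertNth (α := fun _ => ℝ) i t w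

lemma sum_slice {n : ℕ} (μ : Fin (n + 1) → ℝ) (i : Fin (n + 1)) (t : ℝ) (w : Fin n → ℝ) :
    ∑ j, ((μ + ins i t w) j : ℝ) ^ 2 =
      (μ i + t) ^ 2 + ∑ j, (μ (i.succAbove j) + w j) ^ 2 := by
  rw [Fin.sum_univ_succAbove _ i]
  simp

lemma hasDerivAt_slice {c : ℝ} (hc : 1 ≤ c) {n : ℕ} (μ : Fin (n + 1) → ℝ) (i : Fin (n + 1))
    (w : Fin n → ℝ) (t : ℝ) (ht : ∑ j, ((μ + ins i t w) j : ℝ) ^ 2 ≠ c) :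
    HasDerivAt (fun t => shr c (μ + ins i t w) i) (dshr c (μ + ins i t w) i) t := by
  unfold shr dshr
  simp only [sum_slice] at ht ⊢
  simp only [Pi.add_apply, Fin.insertNth_apply_same]
  set a := ∑ j, (μ (i.succAbove j) + w j) ^ 2
  have hS : Continuous fun t : ℝ => (μ i + t) ^ 2 + a := by fun_prop
  rcases lt_or_gt_of_ne ht with h | h
  · rw [if_pos h.le]
    have : (fun t => μ i + t) =ᶠ[nhds t]
        fun t => (μ i + t) * (c / max c ((μ i + t) ^ 2 + a)) := by
      filter_upwards [hS.continuousAt.eventually_lt_const h] with x hx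
      rw [max_eq_left hx.le, div_self (by linarith), mul_one]
    exact this.hasDerivAt_iff.1 ((hasDerivAt_id t).const_add _)
  · rw [if_neg (not_le.2 h)]
    have : (fun t => (μ i + t) * (c / ((μ i + t) ^ 2 + a))) =ᶠ[nhds t]
        fun t => (μ i + t) * (c / max c ((μ i + t) ^ 2 + a)) := by
      filter_upwards [hS.continuousAt.eventually_const_lt h] with x hx
      rw [max_eq_right hx.le]
    refine this.hasDerivAt_iff.1 ?_
    have hne : (μ i + t) ^ 2 + a ≠ 0 := by linarith
    have d1 : HasDerivAt (fun t => μ i + t) 1 t := (hasDerivAt_id t).const_add _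
    have d2 := d1.mul ((hasDerivAt_const t c).div ((d1.pow 2).add_const a) hne)
    refine HasDerivAt.congr_deriv (f := fun t => (μ i + t) * (c / ((μ i + t) ^ 2 + a))) d2 ?_
    simp only [Pi.div_apply, Pi.pow_apply]
    field_simp
    push_cast
    ring

lemma countable_slice {c : ℝ} {n : ℕ} (μ : Fin (n + 1) → ℝ) (i : Fin (n + 1))
    (w : Fin n → ℝ) : {t : ℝ | ∑ j, ((μ + ins i t w) j : ℝ) ^ 2 = c}.Countable := by
  simp only [sum_slice]
  set a := ∑ j, (μ (i.succAbove j) + w j) ^ 2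
  refine Set.Countable.mono (s₂ := {√(c - a) - μ i, -√(c - a) - μ i}) ?_
    (Set.toFinite _).countable
  intro t ht
  simp only [Set.mem_ofPred_eq] at ht
  have h1 : (μ i + t) ^ 2 = √(c - a) ^ 2 := by
    rw [Real.sq_sqrt (by nlinarith [sq_nonneg (μ i + t)])]; linarith
  rcases sq_eq_sq_iff_eq_or_eq_neg.1 h1 with h | h
  · left; linarith
  · right; simp only [Set.mem_singleton_iff]; linarith

lemma integrable_sq_coord {B : ℕ} (i : Fin B) :
    Integrable (fun z : Fin B → ℝ => z i ^ 2) (Measure.pi fun _ => gaussianReal 0 1) := by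
  have : Integrable (fun x : ℝ => x ^ 2) (gaussianReal 0 1) :=
    (memLp_id_gaussianReal (μ := 0) (v := 1) 2).integrable_sq
  exact integrable_comp_eval (μ := fun _ : Fin B => gaussianReal 0 1) (i := i) this

lemma integral_sq_coord {B : ℕ} (i : Fin B) :
    ∫ z : Fin B → ℝ, z i ^ 2 ∂(Measure.pi fun _ => gaussianReal 0 1) = 1 := by
  have h := integral_comp_eval (μ := fun _ : Fin B => gaussianReal 0 1) (i := i)
    (f := fun x : ℝ => x ^ 2) (by fun_prop)
  rw [h]
  have h2 := variance_id_gaussianReal (μ := 0) (v := 1)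
  rw [variance_eq_integral (by fun_prop)] at h2
  simpa using h2

lemma integrable_coord {B : ℕ} (i : Fin B) :
    Integrable (fun z : Fin B → ℝ => z i) (Measure.pi fun _ => gaussianReal 0 1) := by
  have : Integrable (fun x : ℝ => x) (gaussianReal 0 1) :=
    (memLp_id_gaussianReal (μ := 0) (v := 1) 1).integrable (by simp)
  exact integrable_comp_eval (μ := fun _ : Fin B => gaussianReal 0 1) (i := i) this

lemma integrable_mul_shr {c : ℝ} (hc : 1 ≤ c) {B : ℕ} (μ : Fin B → ℝ) (i : Fin B) :
    Integrable (fun z : Fin B → ℝ => z i * shr c (μ + z) i)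
      (Measure.pi fun _ => gaussianReal 0 1) := by
  refine (integrable_coord i).mul_bdd (c := c + 3) ?_ (ae_of_all _ fun z => abs_shr_le hc _ _)
  exact ((continuous_shr hc i).comp (by fun_prop : Continuous fun z => μ + z)).aestronglyMeasurable

lemma integrable_dshr {c : ℝ} (hc : 1 ≤ c) {B : ℕ} (μ : Fin B → ℝ) (i : Fin B) :
    Integrable (fun z : Fin B → ℝ => dshr c (μ + z) i)
      (Measure.pi fun _ => gaussianReal 0 1) := by
  refine Integrable.of_bound ?_ (c + 3) (ae_of_all _ fun z => abs_dshr_le hc _ _)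
  exact ((measurable_dshr i).comp
    (by fun_prop : Measurable fun z => μ + z)).aestronglyMeasurable

lemma integrable_shr_sq {c : ℝ} (hc : 1 ≤ c) {B : ℕ} (μ : Fin B → ℝ) (i : Fin B) :
    Integrable (fun z : Fin B → ℝ => shr c (μ + z) i ^ 2)
      (Measure.pi fun _ => gaussianReal 0 1) := by
  refine Integrable.of_bound ?_ ((c + 3) ^ 2) (ae_of_all _ fun z => ?_)
  · exact (((continuous_shr hc i).comp
      (by fun_prop : Continuous fun z => μ + z)).pow 2).aestronglyMeasurable
  · rw [norm_pow]
    exact pow_le_pow_left₀ (norm_nonneg _) (abs_shr_le hc _ _) 2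

/-- Stein's identity for the shrinkage field. -/
lemma stein_shr {c : ℝ} (hc : 1 ≤ c) {B : ℕ} (μ : Fin B → ℝ) (i : Fin B) :
    ∫ z : Fin B → ℝ, z i * shr c (μ + z) i ∂(Measure.pi fun _ => gaussianReal 0 1) =
    ∫ z : Fin B → ℝ, dshr c (μ + z) i ∂(Measure.pi fun _ => gaussianReal 0 1) := by
  obtain _ | n := B
  · exact i.elim0
  have mp := (measurePreserving_piFinSuccAbove (fun _ : Fin (n + 1) => gaussianReal 0 1) i).symm
  have hemb := (MeasurableEquiv.piFinSuccAbove (fun _ : Fin (n + 1) => ℝ) i).symm.measurableEmbedding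
  rw [← mp.integral_comp hemb, ← mp.integral_comp hemb]
  have j1 := (mp.integrable_comp_emb hemb).2 (integrable_mul_shr hc μ i)
  have j2 := (mp.integrable_comp_emb hemb).2 (integrable_dshr hc μ i)
  refine (integral_prod_symm _ j1).trans (Eq.trans ?_ (integral_prod_symm _ j2).symm)
  congr 1
  ext w
  have hmap : ∀ t : ℝ, (MeasurableEquiv.piFinSuccAbove (fun _ : Fin (n + 1) => ℝ) i).symm (t, w)
      = ins i t w := fun t => rfl
  simp only [Function.comp_apply, hmap, Fin.insertNth_apply_same]
  have hcont : Continuous fun t : ℝ => μ + (ins i t w) := by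
    refine continuous_const.add ?_
    exact Continuous.finInsertNth i continuous_id continuous_const
  exact stein_one_dim (fun t => shr c (μ + ins i t w) i)
    (fun t => dshr c (μ + ins i t w) i) _ (countable_slice (c := c) μ i w)
    ((continuous_shr hc i).comp hcont)
    (fun t ht => hasDerivAt_slice hc μ i w t ht)
    ((measurable_dshr i).comp hcont.measurable) (c + 3) (fun t => abs_shr_le hc _ _)
    (fun t => abs_dshr_le hc _ _)

lemma jamesStein_eq {B : ℕ} (hB : 2 < B) (y : Fin B → ℝ) (i : Fin B) :
    jamesStein B y i = y i - shr ((B : ℝ) - 2) y i := by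
  have hc : (0 : ℝ) < (B : ℝ) - 2 := by
    have : (2 : ℝ) < B := by exact_mod_cast hB
    linarith
  simp only [jamesStein, shr, Pi.smul_apply, smul_eq_mul]
  set c := (B : ℝ) - 2
  have h1 := sq_le_S y i
  set S := ∑ j, y j ^ 2
  rcases (le_trans (sq_nonneg _) h1).eq_or_lt with h | h
  · have : y i = 0 := by
      rw [← h] at h1
      exact pow_eq_zero_iff two_ne_zero |>.1 (le_antisymm h1 (sq_nonneg _))
    simp [this]
  · rcases le_total S c with h2 | h2
    · have : 1 ≤ c / S := by rwa [le_div_iff₀ h, one_mul]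
      rw [max_eq_right (by linarith), max_eq_left h2, div_self hc.ne']
      ring
    · have : c / S ≤ 1 := by rwa [div_le_one h]
      rw [max_eq_left (by linarith), max_eq_right h2]
      ring

lemma sum_shr_sq (c : ℝ) {B : ℕ} (y : Fin B → ℝ) :
    ∑ i, shr c y i ^ 2 = (∑ j, y j ^ 2) * (c / max c (∑ j, y j ^ 2)) ^ 2 := by
  simp only [shr, mul_pow, ← Finset.sum_mul]

lemma sum_mul_shr (c : ℝ) {B : ℕ} (y : Fin B → ℝ) :
    ∑ i, y i * shr c y i = (∑ j, y j ^ 2) * (c / max c (∑ j, y j ^ 2)) := by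
  simp only [shr, ← mul_assoc, ← Finset.sum_mul, pow_two]

lemma sum_dshr_le {c : ℝ} {B : ℕ} (y : Fin B → ℝ) (h : ∑ j, y j ^ 2 ≤ c) :
    ∑ i, dshr c y i = B := by
  simp [dshr, h]

lemma sum_dshr_gt {c : ℝ} (hc : 0 < c) {B : ℕ} (hcB : c = (B : ℝ) - 2) (y : Fin B → ℝ)
    (h : c < ∑ j, y j ^ 2) :
    ∑ i, dshr c y i = c ^ 2 / ∑ j, y j ^ 2 := by
  simp only [dshr, if_neg (not_le.2 h), Finset.sum_sub_distrib, ← Finset.sum_div,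
    ← Finset.mul_sum]
  simp only [Finset.sum_const, Finset.card_univ, Fintype.card_fin, nsmul_eq_mul]
  have : (0 : ℝ) < ∑ j, y j ^ 2 := hc.trans h
  have hB : (B : ℝ) = c + 2 := by linarith
  rw [hB]
  field_simp
  ring

section risk

variable {B : ℕ} (hB : 2 < B) (μ : Fin B → ℝ)

/-- The loss. -/
def loss {B : ℕ} (μ z : Fin B → ℝ) : ℝ := ∑ i, (μ i - jamesStein B (μ + z) i) ^ 2

lemma loss_eq {B : ℕ} (hB : 2 < B) (μ z : Fin B → ℝ) :
    loss μ z = ∑ i, z i ^ 2 - 2 * ∑ i, z i * shr ((B : ℝ) - 2) (μ + z) i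
      + ∑ i, shr ((B : ℝ) - 2) (μ + z) i ^ 2 := by
  simp only [loss, jamesStein_eq hB, Finset.mul_sum, ← Finset.sum_sub_distrib,
    ← Finset.sum_add_distrib, Pi.add_apply]
  refine Finset.sum_congr rfl fun i _ => ?_
  ring

lemma one_le_c {B : ℕ} (hB : 2 < B) : (1 : ℝ) ≤ (B : ℝ) - 2 := by
  have : (3 : ℝ) ≤ B := by exact_mod_cast hB
  linarith

lemma integrable_loss {B : ℕ} (hB : 2 < B) (μ : Fin B → ℝ) :
    Integrable (loss μ) (Measure.pi fun _ => gaussianReal 0 1) := by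
  have hc := one_le_c hB
  rw [funext (loss_eq hB μ)]
  exact ((integrable_finsetSum _ fun i _ => integrable_sq_coord i).sub
    ((integrable_finsetSum _ fun i _ => integrable_mul_shr hc μ i).const_mul 2)).add
    (integrable_finsetSum _ fun i _ => integrable_shr_sq hc μ i)

/-- Bounding the risk through Stein's identity with multiplier `l`. -/
lemma risk_le_s4 {B : ℕ} (hB : 2 < B) (μ : Fin B → ℝ) (l a : ℝ)
    (h : ∀ z, loss μ z + l * (∑ i, z i * shr ((B : ℝ) - 2) (μ + z) i
      - ∑ i, dshr ((B : ℝ) - 2) (μ + z) i) ≤ ∑ i, z i ^ 2 + a) :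
    ∫ z, loss μ z ∂(Measure.pi fun _ => gaussianReal 0 1) ≤ B + a := by
  have hc := one_le_c hB
  have k1 := integrable_finsetSum Finset.univ fun i _ => integrable_mul_shr hc μ i
  have k2 := integrable_finsetSum Finset.univ fun i _ => integrable_dshr hc μ i
  have k3 := integrable_finsetSum Finset.univ fun (i : Fin B) _ => integrable_sq_coord i
  have hint := integral_mono ((integrable_loss hB μ).add ((k1.sub k2).const_mul l))
    (k3.add (integrable_const a)) h
  rw [integral_add' (integrable_loss hB μ) ((k1.sub k2).const_mul l),
    integral_const_mul, integral_sub' k1 k2,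
    integral_finsetSum _ (fun i _ => integrable_mul_shr hc μ i),
    integral_finsetSum _ (fun i _ => integrable_dshr hc μ i),
    integral_add' k3 (integrable_const a),
    integral_finsetSum _ (fun i _ => integrable_sq_coord i)] at hint
  simp only [stein_shr hc, integral_sq_coord] at hint
  simpa using hint

lemma risk_le_B {B : ℕ} (hB : 2 < B) (μ : Fin B → ℝ) :
    ∫ z, loss μ z ∂(Measure.pi fun _ => gaussianReal 0 1) ≤ B := by
  have hc := one_le_c hB
  have := risk_le_s4 hB μ 2 0 fun z => by
    rw [loss_eq hB, sum_shr_sq]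
    rcases le_or_gt (∑ j, (μ + z) j ^ 2) ((B : ℝ) - 2) with h | h
    · rw [sum_dshr_le _ h, max_eq_left h, div_self (by linarith)]
      linarith
    · rw [sum_dshr_gt (by linarith) rfl _ h, max_eq_right h.le]
      set S := ∑ j, (μ + z) j ^ 2
      have hS : 0 < S := by linarith
      have e : S * (((B : ℝ) - 2) / S) ^ 2 = ((B : ℝ) - 2) ^ 2 / S := by field_simp
      have : 0 ≤ ((B : ℝ) - 2) ^ 2 / S := by positivity
      rw [e]
      linarith
  simpa using this

lemma risk_zero_s4 {B : ℕ} (hB : 2 < B) :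
    ∫ z, loss (0 : Fin B → ℝ) z ∂(Measure.pi fun _ => gaussianReal 0 1) ≤ 2 := by
  have hc := one_le_c hB
  have := risk_le_s4 hB 0 1 (-((B : ℝ) - 2)) fun z => by
    rw [loss_eq hB]
    simp only [zero_add]
    rw [sum_shr_sq, sum_mul_shr]
    rcases le_or_gt (∑ j, z j ^ 2) ((B : ℝ) - 2) with h | h
    · rw [sum_dshr_le _ h, max_eq_left h, div_self (by linarith)]
      linarith
    · rw [sum_dshr_gt (by linarith) rfl _ h, max_eq_right h.le]
      set S := ∑ j, z j ^ 2
      have hS : 0 < S := by linarith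
      have e : S * (((B : ℝ) - 2) / S) ^ 2 = ((B : ℝ) - 2) ^ 2 / S := by field_simp
      have e2 : S * (((B : ℝ) - 2) / S) = (B : ℝ) - 2 := by field_simp
      rw [e, e2]
      linarith
  linarith

lemma measurable_loss (B : ℕ) :
    Measurable fun p : (Fin B → ℝ) × (Fin B → ℝ) => loss p.1 p.2 := by
  unfold loss jamesStein
  simp only [Pi.smul_apply, smul_eq_mul]
  fun_prop

end risk

/-- **James–Stein minimax MSE bound.** For `B > 2`,
`M_B(ε|JamesStein) = (1/B) sup_{ν ∈ F_{ε,B}} E ‖X − η^JS(X+Z)‖₂² ≤ ε + 2/B`,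
with `X ∼ ν` and `Z ∼ N(0,I_B)` independent. -/
theorem jamesStein_minimax_bound (B : ℕ) (hB : 2 < B)
    (ε : ℝ) (hε0 : 0 ≤ ε) (hε1 : ε ≤ 1) :
    (B : ℝ≥0∞)⁻¹ *
      ⨆ ν ∈ sparseClass B ε,
        ∫⁻ p, ENNReal.ofReal (∑ i, (p.1 i - jamesStein B (p.1 + p.2) i) ^ 2)
          ∂(ν.prod (stdGaussian B))
    ≤ ENNReal.ofReal (ε + 2 / B) := by
  have hB0 : (B : ℝ≥0∞) ≠ 0 := by
    simp only [ne_eq, Nat.cast_eq_zero]; omega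
  have hBr : (0 : ℝ) < B := by exact_mod_cast (by omega : 0 < B)
  have hgoal : ENNReal.ofReal (ε + 2 / B) = (B : ℝ≥0∞)⁻¹ * (2 + B * ENNReal.ofReal ε) := by
    rw [mul_add, ← mul_assoc, ENNReal.inv_mul_cancel hB0 (ENNReal.natCast_ne_top B), one_mul,
      ENNReal.ofReal_add hε0 (by positivity), ENNReal.ofReal_div_of_pos hBr,
      ENNReal.ofReal_natCast, ENNReal.div_eq_inv_mul, add_comm]
    simp
  rw [hgoal]
  refine mul_le_mul_right ?_ _
  refine iSup₂_le fun ν hν => ?_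
  obtain ⟨hp, hν0⟩ := hν
  have hlin : ∀ x : Fin B → ℝ,
      ∫⁻ z, ENNReal.ofReal (loss x z) ∂(Measure.pi fun _ : Fin B => gaussianReal 0 1) =
      ENNReal.ofReal (∫ z, loss x z ∂(Measure.pi fun _ : Fin B => gaussianReal 0 1)) := fun x =>
    (ofReal_integral_eq_lintegral_ofReal (integrable_loss hB x)
      (ae_of_all _ fun z => Finset.sum_nonneg fun i _ => sq_nonneg _)).symm
  have hfub : ∫⁻ p, ENNReal.ofReal (∑ i, (p.1 i - jamesStein B (p.1 + p.2) i) ^ 2)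
          ∂(ν.prod (stdGaussian B)) =
      ∫⁻ x, ENNReal.ofReal (∫ z, loss x z ∂(Measure.pi fun _ : Fin B => gaussianReal 0 1)) ∂ν := by
    rw [_root_.stdGaussian]
    simp only [← hlin]
    exact lintegral_prod (fun p : (Fin B → ℝ) × (Fin B → ℝ) => ENNReal.ofReal (loss p.1 p.2))
      (measurable_loss B).ennreal_ofReal.aemeasurable
  rw [hfub]
  have hms : MeasurableSet ({0} : Set (Fin B → ℝ)) := measurableSet_singleton 0
  have hcompl : ν {0}ᶜ ≤ ENNReal.ofReal ε := by
    rw [prob_compl_eq_one_sub hms, tsub_le_iff_right]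
    calc (1 : ℝ≥0∞) = ENNReal.ofReal ε + ENNReal.ofReal (1 - ε) := by
          rw [← ENNReal.ofReal_add hε0 (by linarith)]; simp
      _ ≤ _ := by gcongr
  rw [← lintegral_add_compl _ hms]
  gcongr ?_ + ?_
  · rw [lintegral_singleton]
    calc _ ≤ ENNReal.ofReal 2 * 1 :=
          mul_le_mul' (ENNReal.ofReal_le_ofReal (risk_zero_s4 hB)) prob_le_one
      _ = 2 := by simp
  · calc _ ≤ ∫⁻ _ in {0}ᶜ, (B : ℝ≥0∞) ∂ν := by
          refine lintegral_mono fun x => ?_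
          rw [← ENNReal.ofReal_natCast]
          exact ENNReal.ofReal_le_ofReal (risk_le_B hB x)
      _ = B * ν {0}ᶜ := by rw [setLIntegral_const]
      _ ≤ _ := by gcongr
end
end

section
/- Let φ and Φ denote the standard normal density and cumulative distribution function, and let η^soft(y;τ) = sign(y)(|y| − τ)₊ be scalar soft thresholding. Let F_{1,ε} be the set of Borel probability measures ν on ℝ with ν({x : x ≠ 0}) ≤ ε, and M(ε|Soft) = inf_{τ≥0} sup_{ν∈F_{1,ε}} E[(X − η^soft(X+Z;τ))²] with X ∼ ν and Z ∼ N(0,1) independent. Then for every τ ∈ (0,∞), setting ε = (2φ(τ) − 2τΦ(−τ)) / (τ + 2φ(τ) − 2τΦ(−τ)), one has M(ε|Soft) = 2φ(τ) / (τ + 2φ(τ) − 2τΦ(−τ)). -/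
open MeasureTheory ProbabilityTheory ENNReal

noncomputable section

/-- The standard normal density `φ(x) = e^{-x²/2}/√(2π)`. -/
def stdPhi (x : ℝ) : ℝ := Real.exp (-(x ^ 2) / 2) / Real.sqrt (2 * Real.pi)

/-- The standard normal cumulative distribution function `Φ`. -/
def stdCDF (x : ℝ) : ℝ := ((gaussianReal 0 1) (Set.Iic x)).toReal

/-- Scalar soft thresholding `η^soft(y;τ) = sign(y)(|y| − τ)₊`. -/
def softThr (τ y : ℝ) : ℝ := Real.sign y * max (|y| - τ) 0

/-- The class `F_{1,ε}` of Borel probability measures `ν` on `ℝ` with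
`ν({x : x ≠ 0}) ≤ ε`. -/
def scalarSparse (ε : ℝ) : Set (Measure ℝ) :=
  {ν | IsProbabilityMeasure ν ∧ ν {x : ℝ | x ≠ 0} ≤ ENNReal.ofReal ε}

/-- The minimax MSE of scalar soft thresholding,
`M(ε|Soft) = inf_{τ≥0} sup_{ν ∈ F_{1,ε}} E (X − η^soft(X+Z;τ))²`,
with `X ∼ ν`, `Z ∼ N(0,1)` independent. -/
def Msoft (ε : ℝ) : ℝ≥0∞ :=
  ⨅ (τ : ℝ) (_ : 0 ≤ τ), ⨆ ν ∈ scalarSparse ε,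
    ∫⁻ p : ℝ × ℝ, ENNReal.ofReal ((p.1 - softThr τ (p.1 + p.2)) ^ 2)
      ∂(ν.prod (gaussianReal 0 1))


lemma aux_pdf : gaussianPDFReal 0 1 = stdPhi := by
  ext x
  simp only [gaussianPDFReal_def, stdPhi]
  simp
  ring

lemma aux_deriv (x : ℝ) : HasDerivAt stdPhi (-(x * stdPhi x)) x := by
  have h1 : HasDerivAt (fun x : ℝ => -(x ^ 2) / 2) (-x) x := by
    have := ((hasDerivAt_pow 2 x).neg).div_const 2
    exact this.congr_deriv (by push_cast; ring)
  have := h1.exp.div_const (Real.sqrt (2 * Real.pi))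
  exact this.congr_deriv (by unfold stdPhi; ring)

lemma aux_int0 : Integrable stdPhi := by
  rw [← aux_pdf]; exact integrable_gaussianPDFReal _ _

lemma aux_intn (n : ℕ) : Integrable (fun x => x ^ n * stdPhi x) := by
  have h := integrable_rpow_mul_exp_neg_mul_sq (b := 1 / 2) (by norm_num) (s := (n : ℝ)) (by
    have : (0 : ℝ) ≤ n := n.cast_nonneg
    linarith)
  have h2 := h.div_const (Real.sqrt (2 * Real.pi))
  convert h2 using 2 with x
  simp only [stdPhi, Real.rpow_natCast]
  rw [mul_div_assoc]
  congr 3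
  ring

lemma aux_I1 (t : ℝ) : ∫ x in Set.Ioi t, x * stdPhi x = stdPhi t := by
  have hi : Integrable (fun x => x * stdPhi x) := by simpa using aux_intn 1
  have hd : ∀ x, HasDerivAt (fun x => - stdPhi x) (x * stdPhi x) x := fun x => by
    simpa using (aux_deriv x).fun_neg
  have ht := tendsto_zero_of_hasDerivAt_of_integrableOn_Ioi (a := t) (fun x _ => hd x)
    hi.integrableOn aux_int0.neg.integrableOn
  have := integral_Ioi_of_hasDerivAt_of_tendsto' (a := t) (fun x _ => hd x) hi.integrableOn ht
  simpa using this

lemma aux_I2 (t : ℝ) : ∫ x in Set.Ioi t, (x ^ 2 * stdPhi x - stdPhi x) = t * stdPhi t := by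
  have hi1 : Integrable (fun x => x * stdPhi x) := by simpa using aux_intn 1
  have hi : Integrable (fun x => x ^ 2 * stdPhi x - stdPhi x) := (aux_intn 2).sub aux_int0
  have hd : ∀ x, HasDerivAt (fun x => - (x * stdPhi x)) (x ^ 2 * stdPhi x - stdPhi x) x :=
    fun x => by
      have := ((hasDerivAt_id x).mul (aux_deriv x)).fun_neg
      exact this.congr_deriv (by simp only [id]; ring)
  have ht := tendsto_zero_of_hasDerivAt_of_integrableOn_Ioi (a := t) (fun x _ => hd x)
    hi.integrableOn hi1.neg.integrableOn
  have := integral_Ioi_of_hasDerivAt_of_tendsto' (a := t) (fun x _ => hd x) hi.integrableOn ht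
  simpa using this

lemma aux_neg : (gaussianReal 0 1).map (fun x => -x) = gaussianReal 0 1 := by
  rw [gaussianReal_map_neg]; simp

lemma aux_I0 (t : ℝ) : ∫ x in Set.Ioi t, stdPhi x = stdCDF (-t) := by
  unfold stdCDF
  rw [← aux_neg, Measure.map_apply (by fun_prop) measurableSet_Iic]
  have : (fun x : ℝ => -x) ⁻¹' Set.Iic (-t) = Set.Ici t := by
    ext x; simp
  rw [this, gaussianReal_apply_eq_integral _ one_ne_zero, aux_pdf, ENNReal.toReal_ofReal,
    integral_Ici_eq_integral_Ioi]
  exact integral_nonneg (fun x => by unfold stdPhi; positivity)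

lemma aux_symm (f : ℝ → ℝ) (hf : Measurable f) :
    ∫ z, f (-z) ∂(gaussianReal 0 1) = ∫ z, f z ∂(gaussianReal 0 1) := by
  conv_rhs => rw [← aux_neg]
  rw [integral_map (by fun_prop) (hf.aestronglyMeasurable)]

lemma aux_mem : MemLp (fun x : ℝ => x) 2 (gaussianReal 0 1) := memLp_id_gaussianReal 2

lemma aux_z1 : Integrable (fun x : ℝ => x) (gaussianReal 0 1) := aux_mem.integrable (by norm_num)

lemma aux_z2 : Integrable (fun x : ℝ => x ^ 2) (gaussianReal 0 1) := aux_mem.integrable_sq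

lemma aux_E1 : ∫ x, x ∂(gaussianReal 0 1) = 0 := integral_id_gaussianReal

lemma aux_E2 : ∫ x, x ^ 2 ∂(gaussianReal 0 1) = 1 := by
  have h := variance_eq_sub aux_mem
  rw [variance_fun_id_gaussianReal, aux_E1] at h
  simpa using h.symm

lemma aux_half (t : ℝ) : ∫ z, max (z - t) 0 ∂(gaussianReal 0 1) = stdPhi t - t * stdCDF (-t) := by
  rw [integral_gaussianReal_eq_integral_smul one_ne_zero, aux_pdf]
  have : (fun x => stdPhi x • max (x - t) 0) =
      (Set.Ioi t).indicator (fun x => x * stdPhi x - t * stdPhi x) := by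
    ext x
    by_cases h : t < x
    · rw [Set.indicator_of_mem (by exact h), max_eq_left (by linarith)]; simp; ring
    · rw [Set.indicator_of_notMem (by exact h), max_eq_right (by linarith)]; simp
  rw [this, integral_indicator measurableSet_Ioi, integral_sub, integral_const_mul, aux_I1, aux_I0]
  · have hi1 : Integrable (fun x => x * stdPhi x) := by simpa using aux_intn 1
    exact hi1.integrableOn
  · exact (aux_int0.const_mul t).integrableOn

lemma aux_half2 (t : ℝ) : ∫ z, (max (z - t) 0) ^ 2 ∂(gaussianReal 0 1) =
    (1 + t ^ 2) * stdCDF (-t) - t * stdPhi t := by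
  rw [integral_gaussianReal_eq_integral_smul one_ne_zero, aux_pdf]
  have : (fun x => stdPhi x • (max (x - t) 0) ^ 2) =
      (Set.Ioi t).indicator (fun x => (x ^ 2 * stdPhi x - stdPhi x) +
        ((1 + t ^ 2) * stdPhi x - 2 * t * (x * stdPhi x))) := by
    ext x
    by_cases h : t < x
    · rw [Set.indicator_of_mem (by exact h), max_eq_left (by linarith)]; simp; ring
    · rw [Set.indicator_of_notMem (by exact h), max_eq_right (by linarith)]; simp
  have hi1 : Integrable (fun x => x * stdPhi x) := by simpa using aux_intn 1
  rw [this, integral_indicator measurableSet_Ioi, integral_add, aux_I2, integral_sub,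
    integral_const_mul, integral_const_mul, aux_I1, aux_I0]
  · ring
  · exact (aux_int0.const_mul _).integrableOn
  · exact (hi1.const_mul _).integrableOn
  · exact ((aux_intn 2).sub aux_int0).integrableOn
  · exact ((aux_int0.const_mul _).sub (hi1.const_mul _)).integrableOn

lemma aux_iabs (t : ℝ) : Integrable (fun z => max (|z| - t) 0) (gaussianReal 0 1) :=
  (aux_z1.abs.sub (integrable_const t)).pos_part

lemma aux_ipos (t : ℝ) : Integrable (fun z => max (z - t) 0) (gaussianReal 0 1) :=
  (aux_z1.sub (integrable_const t)).pos_part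

lemma aux_ineg (t : ℝ) : Integrable (fun z => max (-z - t) 0) (gaussianReal 0 1) :=
  (aux_z1.neg.sub (integrable_const t)).pos_part

lemma aux_bsq (t : ℝ) (f : ℝ → ℝ) (hf : Measurable f) (hb : ∀ z, |f z| ≤ |z| + |t|) :
    Integrable (fun z => f z ^ 2) (gaussianReal 0 1) := by
  refine ((aux_z2.const_mul 2).add (integrable_const (2 * t ^ 2))).mono'
    (by fun_prop) (ae_of_all _ fun z => ?_)
  have := hb z
  simp only [Real.norm_eq_abs, Pi.add_apply, abs_pow]
  have h1 : |f z| ^ 2 ≤ (|z| + |t|) ^ 2 := by gcongr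
  nlinarith [sq_nonneg (|z| - |t|), sq_abs z, sq_abs t]

lemma aux_A (t : ℝ) (ht : 0 ≤ t) : ∫ z, max (|z| - t) 0 ∂(gaussianReal 0 1) =
    2 * stdPhi t - 2 * t * stdCDF (-t) := by
  have : ∀ z : ℝ, max (|z| - t) 0 = max (z - t) 0 + max (-z - t) 0 := by
    intro z; grind
  simp_rw [this]
  rw [integral_add (aux_ipos t) (aux_ineg t),
    aux_symm (fun z => max (z - t) 0) (by fun_prop), aux_half]
  ring

lemma aux_isq (t : ℝ) : Integrable (fun z => (max (|z| - t) 0) ^ 2) (gaussianReal 0 1) := by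
  refine aux_bsq t (fun z => max (|z| - t) 0) (by fun_prop) ?_
  intro z; grind

lemma aux_B (t : ℝ) (ht : 0 ≤ t) : ∫ z, (max (|z| - t) 0) ^ 2 ∂(gaussianReal 0 1) =
    2 * ((1 + t ^ 2) * stdCDF (-t) - t * stdPhi t) := by
  have : ∀ z : ℝ, (max (|z| - t) 0) ^ 2 = (max (z - t) 0) ^ 2 + (max (-z - t) 0) ^ 2 := by
    intro z
    rcases le_total 0 z with h | h
    · rw [abs_of_nonneg h, max_eq_right (by linarith : -z - t ≤ 0)]; ring
    · rw [abs_of_nonpos h, max_eq_right (by linarith : z - t ≤ 0)]; ring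
  simp_rw [this]
  rw [integral_add, aux_symm (fun z => (max (z - t) 0) ^ 2) (by fun_prop), aux_half2]
  · ring
  · refine aux_bsq t (fun z => max (z - t) 0) (by fun_prop) ?_
    intro z
    rw [abs_of_nonneg (le_max_right _ _)]
    apply max_le
    · linarith [le_abs_self z, neg_abs_le t, neg_abs_le z]
    · positivity
  · refine aux_bsq t (fun z => max (-z - t) 0) (by fun_prop) ?_
    intro z
    rw [abs_of_nonneg (le_max_right _ _)]
    apply max_le
    · linarith [le_abs_self z, neg_abs_le t, neg_abs_le z]
    · positivity

lemma aux_soft (t y : ℝ) (ht : 0 ≤ t) : softThr t y = y - max (-t) (min y t) := by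
  unfold softThr
  rcases lt_trichotomy y 0 with h | h | h
  · rw [Real.sign_of_neg h, abs_of_neg h]; grind
  · subst h; simp [ht]
  · rw [Real.sign_of_pos h, abs_of_pos h]; grind

lemma aux_meas (t : ℝ) (ht : 0 ≤ t) : Measurable (fun p : ℝ × ℝ =>
    ENNReal.ofReal ((p.1 - softThr t (p.1 + p.2)) ^ 2)) := by
  simp_rw [aux_soft t _ ht]
  fun_prop

/-- The risk at the point `x` . -/
def auxR (t x : ℝ) : ℝ≥0∞ :=
  ∫⁻ z, ENNReal.ofReal ((x - softThr t (x + z)) ^ 2) ∂(gaussianReal 0 1)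

lemma auxR_meas (t : ℝ) (ht : 0 ≤ t) : Measurable (auxR t) :=
  (aux_meas t ht).lintegral_prod_right'

lemma aux_prod (t : ℝ) (ht : 0 ≤ t) (ν : Measure ℝ) [IsProbabilityMeasure ν] :
    ∫⁻ p : ℝ × ℝ, ENNReal.ofReal ((p.1 - softThr t (p.1 + p.2)) ^ 2)
      ∂(ν.prod (gaussianReal 0 1)) = ∫⁻ x, auxR t x ∂ν := by
  rw [lintegral_prod _ (aux_meas t ht).aemeasurable]
  rfl

lemma aux_pt (t x z : ℝ) (ht : 0 ≤ t) :
    (x - softThr t (x + z)) ^ 2 ≤ z ^ 2 - 2 * max (-t) (min x t) * z + t ^ 2 := by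
  rw [aux_soft t _ ht]
  have h1 : max (-t) (min (x + z) t) ≤ t := by grind
  have h2 : -t ≤ max (-t) (min (x + z) t) := le_max_left _ _
  have h3 : 0 ≤ z * (max (-t) (min (x + z) t) - max (-t) (min x t)) := by
    rcases le_total 0 z with h | h
    · exact mul_nonneg h (by grind)
    · exact mul_nonneg_of_nonpos_of_nonpos h (by grind)
  generalize max (-t) (min (x + z) t) = c at *
  generalize max (-t) (min x t) = d at *
  nlinarith

lemma auxR_le (t x : ℝ) (ht : 0 ≤ t) : auxR t x ≤ ENNReal.ofReal (1 + t ^ 2) := by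
  have hi1 := aux_z1.const_mul (2 * max (-t) (min x t))
  have hi : Integrable (fun z => z ^ 2 - 2 * max (-t) (min x t) * z + t ^ 2) (gaussianReal 0 1) :=
    (aux_z2.sub hi1).add (integrable_const _)
  have he : ∫ z, (z ^ 2 - 2 * max (-t) (min x t) * z + t ^ 2) ∂(gaussianReal 0 1) = 1 + t ^ 2 := by
    rw [integral_add (by exact aux_z2.sub hi1) (integrable_const _), integral_sub aux_z2 hi1,
      integral_const_mul, aux_E1, aux_E2]
    simp
  rw [← he, ofReal_integral_eq_lintegral_ofReal hi
    (ae_of_all _ fun z => (sq_nonneg _).trans (aux_pt t x z ht))]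
  exact lintegral_mono fun z => ENNReal.ofReal_le_ofReal (aux_pt t x z ht)

/-- Risk at zero. -/
def auxB (t : ℝ) : ℝ := ∫ z, (max (|z| - t) 0) ^ 2 ∂(gaussianReal 0 1)

lemma auxB_nonneg (t : ℝ) : 0 ≤ auxB t := integral_nonneg fun z => sq_nonneg _

lemma auxR_zero (t : ℝ) (ht : 0 ≤ t) : auxR t 0 = ENNReal.ofReal (auxB t) := by
  unfold auxB auxR
  rw [ofReal_integral_eq_lintegral_ofReal (aux_isq t) (ae_of_all _ fun z => sq_nonneg _)]
  congr 1 with z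
  congr 1
  simp only [zero_sub, zero_add, neg_sq]
  rw [aux_soft t z ht]
  rw [sq_eq_sq_iff_abs_eq_abs]
  grind

lemma auxB_le (t : ℝ) (ht : 0 ≤ t) : auxB t ≤ 1 + t ^ 2 := by
  have := auxR_le t 0 ht
  rw [auxR_zero t ht] at this
  exact (ENNReal.ofReal_le_ofReal_iff (by positivity)).1 this

lemma auxR_sup (t : ℝ) (ht : 0 ≤ t) : ENNReal.ofReal (1 + t ^ 2) ≤ ⨆ n : ℕ, auxR t n := by
  have he : ∫ z, (z - t) ^ 2 ∂(gaussianReal 0 1) = 1 + t ^ 2 := by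
    have hi1 := aux_z1.const_mul (2 * t)
    have : ∀ z : ℝ, (z - t) ^ 2 = z ^ 2 - 2 * t * z + t ^ 2 := fun z => by ring
    simp_rw [this]
    rw [integral_add (by exact aux_z2.sub hi1) (integrable_const _), integral_sub aux_z2 hi1,
      integral_const_mul, aux_E1, aux_E2]
    simp
  have hi : Integrable (fun z => (z - t) ^ 2) (gaussianReal 0 1) := by
    refine aux_bsq t (fun z => z - t) (by fun_prop) ?_
    intro z; grind
  rw [← he, ofReal_integral_eq_lintegral_ofReal hi (ae_of_all _ fun z => sq_nonneg _)]
  let f : ℕ → ℝ → ℝ≥0∞ := fun n =>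
    (Set.Ioi (t - n)).indicator (fun z => ENNReal.ofReal ((z - t) ^ 2))
  have hf : ∀ n, Measurable (f n) := fun n =>
    Measurable.indicator (by fun_prop) measurableSet_Ioi
  have hm : Monotone f := by
    intro m n hmn
    refine Set.indicator_le_indicator_of_subset (Set.Ioi_subset_Ioi ?_) (fun _ => zero_le)
    have : (m : ℝ) ≤ n := by exact_mod_cast hmn
    linarith
  have h1 : ∀ z, ENNReal.ofReal ((z - t) ^ 2) ≤ ⨆ n, f n z := by
    intro z
    obtain ⟨n, hn⟩ := exists_nat_gt (t - z)
    refine le_iSup_of_le n ?_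
    simp only [f]
    rw [Set.indicator_of_mem (by simp only [Set.mem_Ioi]; linarith)]
  refine (lintegral_mono h1).trans ?_
  rw [lintegral_iSup hf hm]
  refine iSup_mono fun n => lintegral_mono fun z => ?_
  refine Set.indicator_le' (f := fun z => ENNReal.ofReal ((z - t) ^ 2))
    (g := fun z => ENNReal.ofReal (((n : ℝ) - softThr t (n + z)) ^ 2)) ?_ (fun _ _ => zero_le) z
  intro z hz
  simp only [Set.mem_Ioi] at hz
  apply ENNReal.ofReal_le_ofReal
  apply le_of_eq
  rw [aux_soft t _ ht, min_eq_right (by linarith), max_eq_right (by linarith)]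
  ring

lemma aux_upper (t ε : ℝ) (ht : 0 ≤ t) (hε : 0 ≤ ε) (ν : Measure ℝ)
    (hν : ν ∈ scalarSparse ε) :
    ∫⁻ x, auxR t x ∂ν ≤ ENNReal.ofReal ((1 - ε) * auxB t + ε * (1 + t ^ 2)) := by
  obtain ⟨hp, hn⟩ := hν
  have hms : MeasurableSet {x : ℝ | x ≠ 0} := (measurableSet_singleton (0 : ℝ)).compl
  rw [← lintegral_add_compl _ hms]
  have hc : {x : ℝ | x ≠ 0}ᶜ = {0} := by ext; simp
  have h1 : ∫⁻ x in {x : ℝ | x ≠ 0}, auxR t x ∂ν ≤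
      ENNReal.ofReal (1 + t ^ 2) * ν {x : ℝ | x ≠ 0} := by
    rw [← setLIntegral_const]
    exact lintegral_mono fun x => auxR_le t x ht
  have h2 : ∫⁻ x in {x : ℝ | x ≠ 0}ᶜ, auxR t x ∂ν =
      ENNReal.ofReal (auxB t) * (1 - ν {x : ℝ | x ≠ 0}) := by
    rw [← prob_compl_eq_one_sub hms, hc, lintegral_singleton, auxR_zero t ht]
  rw [h2]
  refine (add_le_add_left h1 _).trans ?_
  have hfin : ν {x : ℝ | x ≠ 0} ≠ ⊤ := measure_ne_top _ _
  have hle1 : ν {x : ℝ | x ≠ 0} ≤ 1 := prob_le_one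
  generalize ν {x : ℝ | x ≠ 0} = q at *
  lift q to NNReal using hfin
  have hq1 : (q : ℝ) ≤ 1 := by exact_mod_cast hle1
  have hqe : (q : ℝ) ≤ ε := by
    rw [← ENNReal.ofReal_coe_nnreal] at hn
    exact (ENNReal.ofReal_le_ofReal_iff hε).1 hn
  rw [← ENNReal.ofReal_coe_nnreal, ← ENNReal.ofReal_one, ← ENNReal.ofReal_sub _ q.coe_nonneg,
    ← ENNReal.ofReal_mul (by positivity), ← ENNReal.ofReal_mul (auxB_nonneg t),
    ← ENNReal.ofReal_add (by positivity) (mul_nonneg (auxB_nonneg t) (by linarith))]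
  apply ENNReal.ofReal_le_ofReal
  have := auxB_le t ht
  nlinarith [mul_nonneg (sub_nonneg.2 hqe) (sub_nonneg.2 this)]

lemma aux_lower (t ε : ℝ) (ht : 0 ≤ t) (hε : 0 ≤ ε) (hε1 : ε ≤ 1) :
    ENNReal.ofReal ((1 - ε) * auxB t + ε * (1 + t ^ 2)) ≤ ⨆ ν ∈ scalarSparse ε,
    ∫⁻ p : ℝ × ℝ, ENNReal.ofReal ((p.1 - softThr t (p.1 + p.2)) ^ 2)
      ∂(ν.prod (gaussianReal 0 1)) := by
  have key : ∀ n : ℕ, ENNReal.ofReal (1 - ε) * ENNReal.ofReal (auxB t) +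
      ENNReal.ofReal ε * auxR t n ≤ ⨆ ν ∈ scalarSparse ε,
    ∫⁻ p : ℝ × ℝ, ENNReal.ofReal ((p.1 - softThr t (p.1 + p.2)) ^ 2)
      ∂(ν.prod (gaussianReal 0 1)) := by
    intro n
    let ν : Measure ℝ := ENNReal.ofReal (1 - ε) • Measure.dirac 0 +
      ENNReal.ofReal ε • Measure.dirac (n : ℝ)
    have hp : IsProbabilityMeasure ν := ⟨by
      simp only [ν, Measure.add_apply, Measure.smul_apply, measure_univ, smul_eq_mul, mul_one]
      rw [← ENNReal.ofReal_add (by linarith) hε]; simp⟩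
    have hν : ν ∈ scalarSparse ε := by
      refine ⟨hp, ?_⟩
      have hms : MeasurableSet {x : ℝ | x ≠ 0} := (measurableSet_singleton (0 : ℝ)).compl
      simp only [ν, Measure.add_apply, Measure.smul_apply, smul_eq_mul]
      rw [Measure.dirac_apply' _ hms]
      simp only [Set.indicator, Set.mem_ofPred_eq, ne_eq, not_true_eq_false, if_false, mul_zero,
        zero_add]
      exact mul_le_of_le_one_right zero_le prob_le_one
    refine le_trans (le_of_eq ?_) (le_iSup₂ ν hν)
    rw [aux_prod t ht ν]
    simp only [ν]
    rw [lintegral_add_measure, lintegral_smul_measure, lintegral_smul_measure, lintegral_dirac,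
      lintegral_dirac, auxR_zero t ht]
    simp
  refine le_trans ?_ (iSup_le key)
  rw [← ENNReal.add_iSup, ← ENNReal.mul_iSup, ENNReal.ofReal_add
    (mul_nonneg (by linarith) (auxB_nonneg t)) (by positivity), ENNReal.ofReal_mul (by linarith),
    ENNReal.ofReal_mul hε]
  gcongr
  exact auxR_sup t ht

lemma aux_conv (t τ : ℝ) : auxB τ - 2 * (t - τ) * ∫ z, max (|z| - τ) 0 ∂(gaussianReal 0 1)
    ≤ auxB t := by
  unfold auxB
  rw [← integral_const_mul, ← integral_sub (aux_isq τ) ((aux_iabs τ).const_mul _)]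
  refine integral_mono ((aux_isq τ).sub ((aux_iabs τ).const_mul _)) (aux_isq t) fun z => ?_
  show (max (|z| - τ) 0) ^ 2 - 2 * (t - τ) * max (|z| - τ) 0 ≤ (max (|z| - t) 0) ^ 2
  rcases le_total (|z| - τ) 0 with h | h
  · rw [max_eq_right h]; nlinarith [sq_nonneg (max (|z| - t) 0)]
  · rw [max_eq_left h]
    rcases le_total (|z| - t) 0 with h' | h'
    · rw [max_eq_right h']; nlinarith
    · rw [max_eq_left h']; nlinarith [sq_nonneg (t - τ)]

/-- **Parametric formula for the soft thresholding minimax MSE.**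
For every `τ ∈ (0,∞)`, setting
`ε = (2φ(τ) − 2τΦ(−τ))/(τ + 2φ(τ) − 2τΦ(−τ))`, one has
`M(ε|Soft) = 2φ(τ)/(τ + 2φ(τ) − 2τΦ(−τ))`. -/
theorem soft_minimax_formula (τ : ℝ) (hτ : 0 < τ) :
    Msoft ((2 * stdPhi τ - 2 * τ * stdCDF (-τ)) /
        (τ + 2 * stdPhi τ - 2 * τ * stdCDF (-τ))) =
      ENNReal.ofReal (2 * stdPhi τ /
        (τ + 2 * stdPhi τ - 2 * τ * stdCDF (-τ))) := by
  have hA := aux_A τ hτ.le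
  have hA0 : 0 ≤ ∫ z, max (|z| - τ) 0 ∂(gaussianReal 0 1) :=
    integral_nonneg fun z => le_max_right _ _
  have hB : auxB τ = _ := aux_B τ hτ.le
  have hconv := fun t => aux_conv t τ
  rw [hA] at hA0
  simp_rw [hA] at hconv
  have hD : 0 < τ + 2 * stdPhi τ - 2 * τ * stdCDF (-τ) := by linarith
  set D := τ + 2 * stdPhi τ - 2 * τ * stdCDF (-τ) with hDdef
  set A := 2 * stdPhi τ - 2 * τ * stdCDF (-τ) with hAdef
  have hDA : D = τ + A := by rw [hDdef, hAdef]; ring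
  have hε : 0 ≤ A / D := by positivity
  have hε1 : A / D ≤ 1 := by rw [div_le_one hD]; linarith
  have h1ε : 1 - A / D = τ / D := by field_simp; linarith
  have hval : 2 * stdPhi τ / D = (1 - A / D) * auxB τ + A / D * (1 + τ ^ 2) := by
    rw [h1ε, hB, hAdef]
    field_simp
    ring
  rw [hval]
  unfold Msoft
  apply le_antisymm
  · refine (iInf₂_le τ hτ.le).trans (iSup₂_le fun ν hν => ?_)
    have := hν.1
    rw [aux_prod τ hτ.le ν]
    exact aux_upper τ _ hτ.le hε ν hν
  · refine le_iInf₂ fun t ht => le_trans (ENNReal.ofReal_le_ofReal ?_) (aux_lower t _ ht hε hε1)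
    rw [h1ε]
    have h := hconv t
    have e1 : ∀ b s : ℝ, τ / D * b + A / D * s = (τ * b + A * s) / D := fun b s => by ring
    rw [e1, e1]
    apply div_le_div_of_nonneg_right _ hD.le
    nlinarith [mul_le_mul_of_nonneg_left h hτ.le, mul_nonneg hA0 (sq_nonneg (t - τ))]
end
end

section
/- Let B ≥ 1, τ ≥ 0, and let η^soft(y;τ) = (1 − τ/‖y‖₂)₊ · y be block soft thresholding on ℝ^B. The risk R(μ;τ) = E ‖η^soft(μ+Z;τ) − μ‖₂² (Z ∼ N(0, I_B)) depends on μ only through ‖μ‖₂; write R̃(ξ;τ) = R(μ;τ) when ξ = ‖μ‖₂². Then: (i) ξ ↦ R̃(ξ;τ) is monotone nondecreasing on [0,∞); (ii) R̃(·;τ) is differentiable in ξ with 0 ≤ ∂R̃/∂ξ ≤ 1; (iii) R̃(ξ;τ) ≤ min{ R̃(0;τ) + ξ, B + τ² } for all ξ ≥ 0; and (iv) lim_{ξ→∞} R̃(ξ;τ) = B + τ². -/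
open MeasureTheory ProbabilityTheory ENNReal Filter

noncomputable section

/-- The risk `R(μ;τ) = E ‖η^soft(μ+Z;τ) − μ‖₂²`, `Z ∼ N(0,I_B)`. -/
def blockSoftRisk (B : ℕ) (τ : ℝ) (μ : Fin B → ℝ) : ℝ :=
  ∫ z, (∑ i, (blockSoft B τ (μ + z) i - μ i) ^ 2) ∂(stdGaussian B)

/-- The risk as a function `R̃(ξ;τ)` of `ξ = ‖μ‖₂²`, realized at the point
`√ξ · e₁`. -/
def blockSoftRiskSq (B : ℕ) (τ : ℝ) (ξ : ℝ) : ℝ :=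
  blockSoftRisk B τ (fun i => if (i : ℕ) = 0 then Real.sqrt ξ else 0)


section BlockSoftHelpers

variable {E : Type*} [NormedAddCommGroup E] [InnerProductSpace ℝ E]

/-- Soft thresholding on an inner product space. -/
def gSoft (τ : ℝ) (y : E) : E := (max (1 - τ / ‖y‖) 0) • y

/-- The complementary projection to the ball. -/
def gProj (τ : ℝ) (y : E) : E := y - gSoft τ y

lemma gSoft_of_le {τ : ℝ} {y : E} (h : ‖y‖ ≤ τ) : gSoft τ y = 0 := by
  by_cases hy : y = 0
  · simp [gSoft, hy]
  · have : 0 < ‖y‖ := norm_pos_iff.2 hy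
    have h1 : 1 ≤ τ / ‖y‖ := by rwa [one_le_div this]
    simp [gSoft, max_eq_right (by linarith : 1 - τ / ‖y‖ ≤ 0)]

lemma gSoft_of_lt {τ : ℝ} (hτ : 0 ≤ τ) {y : E} (h : τ < ‖y‖) :
    gSoft τ y = (1 - τ / ‖y‖) • y := by
  have : 0 < ‖y‖ := by linarith
  have h1 : τ / ‖y‖ ≤ 1 := by rw [div_le_one this]; exact h.le
  simp [gSoft, max_eq_left (by linarith : 0 ≤ 1 - τ / ‖y‖)]

lemma gProj_of_le {τ : ℝ} {y : E} (h : ‖y‖ ≤ τ) : gProj τ y = y := by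
  simp [gProj, gSoft_of_le h]

lemma gProj_of_lt {τ : ℝ} (hτ : 0 ≤ τ) {y : E} (h : τ < ‖y‖) :
    gProj τ y = (τ / ‖y‖) • y := by
  rw [gProj, gSoft_of_lt hτ h, sub_smul, one_smul]; abel

lemma norm_gProj_le {τ : ℝ} (hτ : 0 ≤ τ) (y : E) : ‖gProj τ y‖ ≤ τ := by
  rcases le_or_gt ‖y‖ τ with h | h
  · rwa [gProj_of_le h]
  · have : 0 < ‖y‖ := by linarith
    rw [gProj_of_lt hτ h, norm_smul, Real.norm_of_nonneg (by positivity)]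
    rw [div_mul_cancel₀ _ this.ne']

lemma inner_gSoft_nonneg {τ : ℝ} (hτ : 0 ≤ τ) (y y' : E) :
    0 ≤ inner ℝ (gSoft τ y) (gProj τ y - gProj τ y') := by
  rcases le_or_gt ‖y‖ τ with h | h
  · simp [gSoft_of_le h]
  · have hp : 0 < ‖y‖ := by linarith
    have h1 : 0 ≤ 1 - τ / ‖y‖ := by
      rw [sub_nonneg, div_le_one hp]; exact h.le
    rw [gSoft_of_lt hτ h, real_inner_smul_left]
    refine mul_nonneg h1 ?_
    rw [inner_sub_right]
    have h2 : inner ℝ y (gProj τ y) = τ * ‖y‖ := by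
      rw [gProj_of_lt hτ h, real_inner_smul_right, real_inner_self_eq_norm_sq]
      field_simp
    have h3 := real_inner_le_norm y (gProj τ y')
    have h4 := mul_le_mul_of_nonneg_left (norm_gProj_le hτ y') hp.le
    linarith

lemma norm_gProj_sub_le {τ : ℝ} (hτ : 0 ≤ τ) (y y' : E) :
    ‖gProj τ y - gProj τ y'‖ ≤ ‖y - y'‖ := by
  have h1 := inner_gSoft_nonneg hτ y y'
  have h2 := inner_gSoft_nonneg hτ y' y
  have h3 : inner ℝ (y - y') (gProj τ y - gProj τ y') = inner ℝ (gSoft τ y) (gProj τ y - gProj τ y')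
      + inner ℝ (gSoft τ y') (gProj τ y' - gProj τ y) + ‖gProj τ y - gProj τ y'‖ ^ 2 := by
    have : y - y' = gSoft τ y - gSoft τ y' + (gProj τ y - gProj τ y') := by
      simp only [gProj]; abel
    rw [← neg_sub (gProj τ y) (gProj τ y'), inner_neg_right, this, inner_add_left,
      real_inner_self_eq_norm_sq, inner_sub_left]; ring
  have h4 := real_inner_le_norm (y - y') (gProj τ y - gProj τ y')
  by_contra! hc
  have := norm_nonneg (y - y')
  nlinarith

lemma continuous_gProj {τ : ℝ} (hτ : 0 ≤ τ) : Continuous (gProj (E := E) τ) := by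
  have : LipschitzWith 1 (gProj (E := E) τ) :=
    LipschitzWith.of_dist_le_mul fun x y => by
      simpa [dist_eq_norm] using norm_gProj_sub_le hτ x y
  exact this.continuous

/-- The loss. -/
def gLoss (τ : ℝ) (m z : E) : ℝ := ‖gSoft τ (m + z) - m‖ ^ 2

lemma gLoss_eq (τ : ℝ) (m z : E) : gLoss τ m z = ‖z - gProj τ (m + z)‖ ^ 2 := by
  rw [gLoss, gProj]; congr 2; abel

lemma norm_sub_gProj_le {τ : ℝ} (hτ : 0 ≤ τ) (m z : E) : ‖z - gProj τ (m + z)‖ ≤ ‖z‖ + τ :=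
  (norm_sub_le _ _).trans (by linarith [norm_gProj_le hτ (m + z)])

lemma gLoss_le {τ : ℝ} (hτ : 0 ≤ τ) (m z : E) : gLoss τ m z ≤ (‖z‖ + τ) ^ 2 := by
  rw [gLoss_eq]
  exact pow_le_pow_left₀ (norm_nonneg _) (norm_sub_gProj_le hτ m z) 2

lemma gLoss_lip {τ : ℝ} (hτ : 0 ≤ τ) (m m' z : E) :
    |gLoss τ m z - gLoss τ m' z| ≤ 2 * (‖z‖ + τ) * ‖m - m'‖ := by
  rw [gLoss_eq, gLoss_eq, sq_sub_sq, abs_mul]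
  have h1 := norm_sub_gProj_le hτ m z
  have h2 := norm_sub_gProj_le hτ m' z
  have h3 := abs_norm_sub_norm_le (z - gProj τ (m + z)) (z - gProj τ (m' + z))
  have h4 : ‖z - gProj τ (m + z) - (z - gProj τ (m' + z))‖ ≤ ‖m - m'‖ := by
    have := norm_gProj_sub_le hτ (m' + z) (m + z)
    rw [show z - gProj τ (m + z) - (z - gProj τ (m' + z)) = gProj τ (m' + z) - gProj τ (m + z) by
      abel]
    rwa [add_sub_add_right_eq_sub, norm_sub_rev m'] at this
  gcongr
  · rw [abs_of_nonneg (by positivity)]; linarith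
  · exact h3.trans h4

lemma continuous_gLoss {τ : ℝ} (hτ : 0 ≤ τ) (m : E) : Continuous (gLoss τ m) := by
  have : gLoss τ m = fun z => ‖z - gProj τ (m + z)‖ ^ 2 := funext fun z => gLoss_eq τ m z
  rw [this]
  have := continuous_gProj (E := E) hτ
  fun_prop

open Classical in
/-- Half the derivative density. -/
def gH (τ : ℝ) (e y : E) : ℝ :=
  if ‖y‖ ≤ τ then 1 else τ / ‖y‖ * (1 - (inner ℝ y e) ^ 2 / ‖y‖ ^ 2)

lemma gH_mem {τ : ℝ} (hτ : 0 ≤ τ) {e : E} (he : ‖e‖ = 1) (y : E) :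
    0 ≤ gH τ e y ∧ gH τ e y ≤ 1 := by
  unfold gH
  split_ifs with h
  · simp
  · push Not at h
    have hp : 0 < ‖y‖ := by linarith
    have h1 : τ / ‖y‖ ≤ 1 := by rw [div_le_one hp]; exact h.le
    have h0 : 0 ≤ τ / ‖y‖ := by positivity
    have h2 : (inner ℝ y e) ^ 2 / ‖y‖ ^ 2 ≤ 1 := by
      rw [div_le_one (by positivity)]
      have := abs_real_inner_le_norm y e
      rw [he, mul_one] at this
      exact sq_le_sq' (by linarith [abs_le.1 this]) (abs_le.1 this).2
    have h3 : 0 ≤ (inner ℝ y e) ^ 2 / ‖y‖ ^ 2 := by positivity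
    constructor
    · exact mul_nonneg h0 (by linarith)
    · exact mul_le_one₀ h1 (by linarith) (by linarith)

lemma continuousAt_gH {τ : ℝ} (hτ : 0 ≤ τ) {e : E} {y : E} (hy : ‖y‖ ≠ τ) :
    ContinuousAt (gH τ e) y := by
  rcases lt_or_gt_of_ne hy with h | h
  · have : gH τ e =ᶠ[nhds y] fun _ => 1 := by
      filter_upwards [continuous_norm.continuousAt.eventually_lt_const h] with x hx
      simp [gH, hx.le]
    exact (continuousAt_const).congr this.symm
  · have : gH τ e =ᶠ[nhds y] fun y => τ / ‖y‖ * (1 - (inner ℝ y e) ^ 2 / ‖y‖ ^ 2) := by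
      filter_upwards [continuous_norm.continuousAt.eventually_const_lt h] with x hx
      simp [gH, hx]
    have hp : ‖y‖ ≠ 0 := by linarith
    refine ContinuousAt.congr ?_ this.symm
    have hp2 : ‖y‖ ^ 2 ≠ 0 := by positivity
    fun_prop (disch := assumption)

lemma hasDerivAt_gLoss {τ : ℝ} (hτ : 0 ≤ τ) {e : E} (he : ‖e‖ = 1) (r : ℝ) (z : E)
    (h : ‖r • e + z‖ ≠ τ) :
    HasDerivAt (fun r : ℝ => gLoss τ (r • e) z) (2 * r * gH τ e (r • e + z)) r := by
  have hc : Continuous fun r : ℝ => ‖r • e + z‖ := by fun_prop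
  rcases lt_or_gt_of_ne h with h | h
  · have h1 : (fun r : ℝ => gLoss τ (r • e) z) =ᶠ[nhds r] fun r => r ^ 2 := by
      filter_upwards [hc.continuousAt.eventually_lt_const h] with x hx
      simp [gLoss, gSoft_of_le hx.le, norm_smul, he]
    refine HasDerivAt.congr_of_eventuallyEq ?_ h1
    simpa [gH, h.le] using hasDerivAt_pow 2 r
  · set a := inner ℝ z e with ha
    have hn : ∀ x : ℝ, ‖x • e + z‖ ^ 2 = x ^ 2 + 2 * x * a + ‖z‖ ^ 2 := by
      intro x
      rw [norm_add_sq_real, norm_smul, he, real_inner_smul_left, real_inner_comm, ← ha]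
      simp; ring
    have hi : ∀ x : ℝ, inner ℝ (x • e + z) e = x + a := by
      intro x
      rw [inner_add_left, real_inner_smul_left, real_inner_self_eq_norm_sq, he, ← ha]; ring
    have hp : 0 < ‖r • e + z‖ := by linarith
    have h1 : (fun r : ℝ => gLoss τ (r • e) z) =ᶠ[nhds r]
        fun r => (‖r • e + z‖ - τ) ^ 2 - 2 * r * (1 - τ / ‖r • e + z‖) * (r + a) + r ^ 2 := by
      filter_upwards [hc.continuousAt.eventually_const_lt h] with x hx
      have hxp : 0 < ‖x • e + z‖ := by linarith
      have hx1 : 0 ≤ 1 - τ / ‖x • e + z‖ := by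
        rw [sub_nonneg, div_le_one hxp]; exact hx.le
      rw [gLoss, gSoft_of_lt hτ hx, norm_sub_sq_real, norm_smul, norm_smul, real_inner_smul_left,
        real_inner_smul_right, hi, he, Real.norm_of_nonneg hx1, mul_one, Real.norm_eq_abs, sq_abs]
      have : (1 - τ / ‖x • e + z‖) * ‖x • e + z‖ = ‖x • e + z‖ - τ := by field_simp
      rw [this]; ring
    refine HasDerivAt.congr_of_eventuallyEq ?_ h1
    have hN : HasDerivAt (fun x : ℝ => ‖x • e + z‖) ((r + a) / ‖r • e + z‖) r := by
      have h2 : (fun x : ℝ => ‖x • e + z‖) = fun x => Real.sqrt (x ^ 2 + 2 * x * a + ‖z‖ ^ 2) := by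
        funext x; rw [← hn, Real.sqrt_sq (norm_nonneg _)]
      have h3 : HasDerivAt (fun x : ℝ => x ^ 2 + 2 * x * a + ‖z‖ ^ 2) (2 * r + 2 * a) r := by
        have := (((hasDerivAt_pow 2 r).add (((hasDerivAt_id r).const_mul 2).mul_const a)).add_const
          (‖z‖ ^ 2))
        simpa using this
      have h4 := h3.sqrt (by rw [← hn]; positivity)
      rw [h2]
      convert h4 using 1
      rw [← hn, Real.sqrt_sq (norm_nonneg _)]
      field_simp
    set n := ‖r • e + z‖ with hnn
    have hd := ((hN.sub_const τ).pow 2).sub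
      ((((hasDerivAt_id r).const_mul 2).mul ((((hasDerivAt_const r τ).div hN hp.ne')).const_sub 1)).mul
        ((hasDerivAt_id r).add_const a)) |>.add (hasDerivAt_pow 2 r)
    refine hd.congr_deriv ?_
    simp only [gH, not_le.2 h, if_false, hi, ← hnn, id, Pi.div_apply, Pi.mul_apply]
    field_simp
    norm_num
    ring

variable [FiniteDimensional ℝ E] [MeasurableSpace E] [BorelSpace E]

local notation "γ" => ProbabilityTheory.stdGaussian E

lemma measurable_gH (τ : ℝ) (e : E) : Measurable (gH τ e) := by
  unfold gH
  refine Measurable.ite (measurableSet_le measurable_norm measurable_const) measurable_const ?_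
  fun_prop

lemma pi_ac {n : ℕ} (μ ν : Fin n → Measure ℝ) [∀ i, SigmaFinite (μ i)] [∀ i, SigmaFinite (ν i)]
    (h : ∀ i, μ i ≪ ν i) : Measure.pi μ ≪ Measure.pi ν := by
  induction n with
  | zero => 
    have : Measure.pi μ = Measure.pi ν := by
      congr 1; funext i; exact i.elim0
    rw [this]
  | succ n ih =>
    have h1 := (measurePreserving_piFinSuccAbove μ 0).symm
    have h2 := (measurePreserving_piFinSuccAbove ν 0).symm
    rw [← h1.map_eq, ← h2.map_eq]
    refine Measure.AbsolutelyContinuous.map ?_ h1.measurable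
    exact (h 0).prod (ih _ _ fun i => h _)

lemma gauss_ac {n : ℕ} :
    ProbabilityTheory.stdGaussian (EuclideanSpace ℝ (Fin n)) ≪ volume := by
  rw [← map_pi_eq_stdGaussian, ← (PiLp.volume_preserving_toLp (Fin n)).map_eq]
  refine Measure.AbsolutelyContinuous.map ?_ (by fun_prop)
  exact pi_ac _ _ fun i => gaussianReal_absolutelyContinuous 0 one_ne_zero

lemma ae_norm_ne {n : ℕ} (hn : 1 ≤ n) (τ : ℝ) (m : EuclideanSpace ℝ (Fin n)) :
    ∀ᵐ z ∂(ProbabilityTheory.stdGaussian (EuclideanSpace ℝ (Fin n))), ‖m + z‖ ≠ τ := by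
  refine gauss_ac.ae_le ?_
  have : Nontrivial (EuclideanSpace ℝ (Fin n)) := by
    have : NeZero n := ⟨by omega⟩
    have : Nonempty (Fin n) := ⟨0⟩
    infer_instance
  have h := Measure.addHaar_sphere (volume : Measure (EuclideanSpace ℝ (Fin n))) (-m) τ
  have h2 := measure_eq_zero_iff_ae_notMem.1 h
  filter_upwards [h2] with z hz
  simpa [dist_eq_norm, add_comm] using hz

/-- The risk. -/
def gRisk (τ : ℝ) (m : E) : ℝ := ∫ z, gLoss τ m z ∂γ

lemma integrable_norm_gauss : Integrable (fun z : E => ‖z‖) γ :=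
  (IsGaussian.integrable_id (μ := γ)).norm

lemma integrable_norm_sq_gauss : Integrable (fun z : E => ‖z‖ ^ 2) γ :=
  (IsGaussian.memLp_two_id (μ := γ)).integrable_norm_pow (by norm_num)

lemma integrable_bound (τ : ℝ) : Integrable (fun z : E => (‖z‖ + τ) ^ 2) γ := by
  have : (fun z : E => (‖z‖ + τ) ^ 2) = fun z => ‖z‖ ^ 2 + 2 * τ * ‖z‖ + τ ^ 2 := by
    funext z; ring
  rw [this]
  exact (integrable_norm_sq_gauss.add (integrable_norm_gauss.const_mul _)).add (integrable_const _)

lemma integrable_gLoss {τ : ℝ} (hτ : 0 ≤ τ) (m : E) : Integrable (gLoss τ m) γ := by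
  refine (integrable_bound τ).mono' (continuous_gLoss hτ m).aestronglyMeasurable ?_
  refine Eventually.of_forall fun z => ?_
  rw [Real.norm_of_nonneg (by unfold gLoss; positivity)]
  exact gLoss_le hτ m z

/-- The derivative. -/
def gHInt (τ : ℝ) (e : E) (r : ℝ) : ℝ := ∫ z, gH τ e (r • e + z) ∂γ

lemma integrable_gH {τ : ℝ} (hτ : 0 ≤ τ) {e : E} (he : ‖e‖ = 1) (m : E) :
    Integrable (fun z => gH τ e (m + z)) γ := by
  refine (integrable_const (1 : ℝ)).mono'
    ((measurable_gH τ e).comp (measurable_const_add m)).aestronglyMeasurable ?_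
  refine Eventually.of_forall fun z => ?_
  rw [Real.norm_of_nonneg (gH_mem hτ he _).1]
  exact (gH_mem hτ he _).2

lemma gHInt_mem {τ : ℝ} (hτ : 0 ≤ τ) {e : E} (he : ‖e‖ = 1) (r : ℝ) :
    0 ≤ gHInt τ e r ∧ gHInt τ e r ≤ 1 := by
  constructor
  · exact integral_nonneg fun z => (gH_mem hτ he _).1
  · have := integral_mono (integrable_gH hτ he (r • e)) (integrable_const (μ := γ) (1 : ℝ))
      fun z => (gH_mem hτ he _).2
    simpa [gHInt] using this

lemma hasDerivAt_gRisk {τ : ℝ} (hτ : 0 ≤ τ) {e : E} (he : ‖e‖ = 1) (r : ℝ)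
    (hae : ∀ᵐ z ∂γ, ‖r • e + z‖ ≠ τ) :
    HasDerivAt (fun r : ℝ => gRisk τ (r • e)) (2 * r * gHInt τ e r) r := by
  have := (hasDerivAt_integral_of_dominated_loc_of_lip (μ := γ) (s := Set.univ) (x₀ := r)
    (F := fun (r : ℝ) z => gLoss τ (r • e) z) (F' := fun z => 2 * r * gH τ e (r • e + z))
    (bound := fun z => 2 * (‖z‖ + τ)) Filter.univ_mem
    (Eventually.of_forall fun x => (continuous_gLoss hτ _).aestronglyMeasurable)
    (integrable_gLoss hτ _) ((integrable_gH hτ he _).const_mul _).aestronglyMeasurable ?_ ?_ ?_).2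
  · rw [integral_const_mul] at this
    exact this
  · refine Eventually.of_forall fun z => ?_
    refine LipschitzOnWith.of_dist_le_mul fun x _ y _ => ?_
    have := gLoss_lip hτ (x • e) (y • e) z
    rw [← sub_smul, norm_smul, he, mul_one] at this
    have h0 : 0 ≤ 2 * (‖z‖ + τ) := by positivity
    rw [Real.dist_eq, Real.dist_eq, Real.coe_nnabs, abs_of_nonneg h0]
    exact this
  · exact (integrable_norm_gauss.add (integrable_const _)).const_mul _
  · filter_upwards [hae] with z hz
    exact hasDerivAt_gLoss hτ he r z hz

lemma continuousAt_gHInt {τ : ℝ} (hτ : 0 ≤ τ) {e : E} (he : ‖e‖ = 1) (r : ℝ)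
    (hae : ∀ᵐ z ∂γ, ‖r • e + z‖ ≠ τ) : ContinuousAt (gHInt τ e) r := by
  refine continuousAt_of_dominated (bound := fun _ => 1) ?_ ?_ (integrable_const _) ?_
  · exact Eventually.of_forall fun x => (integrable_gH hτ he _).aestronglyMeasurable
  · refine Eventually.of_forall fun x => Eventually.of_forall fun z => ?_
    rw [Real.norm_of_nonneg (gH_mem hτ he _).1]
    exact (gH_mem hτ he _).2
  · filter_upwards [hae] with z hz
    exact (continuousAt_gH hτ hz).comp (f := fun x : ℝ => x • e + z)
      (Continuous.continuousAt (by fun_prop))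

lemma tendsto_gProj {τ : ℝ} (hτ : 0 ≤ τ) {e : E} (he : ‖e‖ = 1) (z : E) :
    Tendsto (fun r : ℝ => gProj τ (r • e + z)) atTop (nhds (τ • e)) := by
  have h1 : Tendsto (fun r : ℝ => e + r⁻¹ • z) atTop (nhds e) := by
    have h0 : Tendsto (fun r : ℝ => r⁻¹ • z) atTop (nhds ((0 : ℝ) • z)) :=
      tendsto_inv_atTop_zero.smul_const z
    simpa using (tendsto_const_nhds (x := e)).add h0
  have h2 : Tendsto (fun r : ℝ => (τ / ‖e + r⁻¹ • z‖) • (e + r⁻¹ • z)) atTop (nhds (τ • e)) := by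
    have := (tendsto_const_nhds (x := τ)).div h1.norm (by simp [he])
    simpa [he] using this.smul h1
  refine h2.congr' ?_
  filter_upwards [eventually_gt_atTop (τ + ‖z‖), eventually_gt_atTop 0] with r hr h0
  have h3 : τ < ‖r • e + z‖ := by
    have := norm_sub_le (r • e + z) z
    rw [add_sub_cancel_right, norm_smul, he, Real.norm_of_nonneg h0.le] at this
    linarith
  rw [gProj_of_lt hτ h3]
  have h4 : r • e + z = r • (e + r⁻¹ • z) := by
    rw [smul_add, smul_smul, mul_inv_cancel₀ h0.ne', one_smul]
  rw [h4, norm_smul, smul_smul, Real.norm_of_nonneg h0.le]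
  congr 1
  field_simp

lemma integral_norm_sq : ∫ z, ‖z‖ ^ 2 ∂γ = Module.finrank ℝ E := by
  have b := stdOrthonormalBasis ℝ E
  have h1 : ∀ i, ∫ z, (inner ℝ (b i) z) ^ 2 ∂γ = 1 := by
    intro i
    have h2 := variance_dual_stdGaussian (innerSL ℝ (b i))
    rw [variance_of_integral_eq_zero (by fun_prop) (integral_strongDual_stdGaussian _)] at h2
    simpa using h2
  have hint : ∀ i, Integrable (fun z => (inner ℝ (b i) z) ^ 2) γ := by
    intro i
    refine integrable_norm_sq_gauss.mono' (by fun_prop) (Eventually.of_forall fun z => ?_)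
    have := abs_real_inner_le_norm (b i) z
    rw [b.norm_eq_one, one_mul] at this
    rw [Real.norm_of_nonneg (by positivity), ← sq_abs]
    gcongr
  have h3 : ∀ z : E, ‖z‖ ^ 2 = ∑ i, (inner ℝ (b i) z) ^ 2 := fun z =>
    (b.sum_sq_inner_right z).symm
  simp_rw [h3]
  rw [integral_finsetSum _ fun i _ => hint i]
  simp [h1]

lemma tendsto_gRisk {τ : ℝ} (hτ : 0 ≤ τ) {e : E} (he : ‖e‖ = 1) :
    Tendsto (fun r : ℝ => gRisk τ (r • e)) atTop (nhds (Module.finrank ℝ E + τ ^ 2)) := by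
  have h1 : ∫ z, ‖z - τ • e‖ ^ 2 ∂γ = Module.finrank ℝ E + τ ^ 2 := by
    have h2 : ∀ z : E, ‖z - τ • e‖ ^ 2 = ‖z‖ ^ 2 - 2 * τ * innerSL ℝ e z + τ ^ 2 := by
      intro z
      rw [norm_sub_sq_real, norm_smul, he, real_inner_smul_right, real_inner_comm]
      simp; ring
    simp_rw [h2]
    have h3 : Integrable (fun z => innerSL ℝ e z) γ :=
      (innerSL ℝ e).integrable_comp (IsGaussian.integrable_id (μ := γ))
    have h4 : ∫ z, innerSL ℝ e z ∂γ = 0 := integral_strongDual_stdGaussian _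
    have h5 : Integrable (fun z => ‖z‖ ^ 2 - 2 * τ * innerSL ℝ e z) γ :=
      integrable_norm_sq_gauss.sub (h3.const_mul _)
    rw [integral_add h5 (integrable_const _), integral_sub integrable_norm_sq_gauss (h3.const_mul _), integral_const_mul, h4,
      integral_norm_sq]
    simp
  rw [← h1]
  refine tendsto_integral_filter_of_dominated_convergence (fun z => (‖z‖ + τ) ^ 2) ?_ ?_
    (integrable_bound τ) ?_
  · exact Eventually.of_forall fun x => (continuous_gLoss hτ _).aestronglyMeasurable
  · refine Eventually.of_forall fun x => Eventually.of_forall fun z => ?_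
    rw [Real.norm_of_nonneg (by unfold gLoss; positivity)]
    exact gLoss_le hτ _ z
  · refine Eventually.of_forall fun z => ?_
    simp_rw [gLoss_eq]
    exact ((tendsto_const_nhds.sub (tendsto_gProj hτ he z)).norm).pow 2

lemma gRisk_map {τ : ℝ} (hτ : 0 ≤ τ) (U : E ≃ₗᵢ[ℝ] E) (m : E) : gRisk τ (U m) = gRisk τ m := by
  have h := stdGaussian_map U
  unfold gRisk
  conv_lhs => rw [← h]
  rw [integral_map (by fun_prop) (continuous_gLoss hτ _).aestronglyMeasurable]
  congr 1
  funext z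
  have : gSoft τ (U m + U z) = U (gSoft τ (m + z)) := by
    rw [← map_add, gSoft, gSoft, map_smul, U.norm_map]
  rw [gLoss, this, ← map_sub, U.norm_map, gLoss]

lemma gRisk_congr {τ : ℝ} (hτ : 0 ≤ τ) {m m' : E} (h : ‖m‖ = ‖m'‖) :
    gRisk τ m = gRisk τ m' := by
  have h1 := Submodule.reflection_sub h
  rw [← h1, gRisk_map hτ]

end BlockSoftHelpers

lemma blockSoftRisk_eq (B : ℕ) {τ : ℝ} (hτ : 0 ≤ τ) (μ : Fin B → ℝ) :
    blockSoftRisk B τ μ = gRisk τ (WithLp.toLp 2 μ : EuclideanSpace ℝ (Fin B)) := by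
  unfold gRisk
  rw [← map_pi_eq_stdGaussian,
    integral_map (by fun_prop) (continuous_gLoss hτ _).aestronglyMeasurable]
  unfold blockSoftRisk _root_.stdGaussian
  congr 1
  funext z
  rw [gLoss, EuclideanSpace.real_norm_sq_eq]
  simp [gSoft, blockSoft, EuclideanSpace.norm_eq, mul_add]

lemma blockSoftRiskSq_eq (B : ℕ) (hB : 1 ≤ B) {τ : ℝ} (hτ : 0 ≤ τ) (ξ : ℝ) :
    blockSoftRiskSq B τ ξ =
      gRisk τ (Real.sqrt ξ • (EuclideanSpace.single ⟨0, hB⟩ 1 : EuclideanSpace ℝ (Fin B))) := by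
  rw [blockSoftRiskSq, blockSoftRisk_eq B hτ]
  congr 1
  ext i
  simp [Pi.single_apply, Fin.ext_iff]

/-- **Properties of the block soft thresholding risk.**
For `B ≥ 1` and `τ ≥ 0`: the risk `R(μ;τ)` depends on `μ` only through
`‖μ‖₂²` (so `R(μ;τ) = R̃(‖μ‖₂²;τ)`); `R̃(·;τ)` is nondecreasing on `[0,∞)`;
it is differentiable with derivative in `[0,1]`; it satisfies
`R̃(ξ;τ) ≤ min(R̃(0;τ) + ξ, B + τ²)`; and `R̃(ξ;τ) → B + τ²` as `ξ → ∞`. -/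
theorem blockSoft_risk_properties (B : ℕ) (hB : 1 ≤ B) (τ : ℝ) (hτ : 0 ≤ τ) :
    (∀ μ μ' : Fin B → ℝ, (∑ i, (μ i) ^ 2) = (∑ i, (μ' i) ^ 2) →
      blockSoftRisk B τ μ = blockSoftRisk B τ μ') ∧
    (∀ μ : Fin B → ℝ,
      blockSoftRisk B τ μ = blockSoftRiskSq B τ (∑ i, (μ i) ^ 2)) ∧
    MonotoneOn (blockSoftRiskSq B τ) (Set.Ici 0) ∧
    (∀ ξ : ℝ, 0 ≤ ξ → ∃ d : ℝ,
      HasDerivWithinAt (blockSoftRiskSq B τ) d (Set.Ici 0) ξ ∧ 0 ≤ d ∧ d ≤ 1) ∧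
    (∀ ξ : ℝ, 0 ≤ ξ →
      blockSoftRiskSq B τ ξ ≤ min (blockSoftRiskSq B τ 0 + ξ) (B + τ ^ 2)) ∧
    Tendsto (blockSoftRiskSq B τ) atTop (nhds ((B : ℝ) + τ ^ 2)) := by
  set e : EuclideanSpace ℝ (Fin B) := EuclideanSpace.single ⟨0, hB⟩ 1 with hedef
  have he : ‖e‖ = 1 := by simp [hedef]
  have hG : blockSoftRiskSq B τ = fun ξ => gRisk τ (Real.sqrt ξ • e) :=
    funext fun ξ => blockSoftRiskSq_eq B hB hτ ξ
  have hrot : ∀ μ μ' : Fin B → ℝ, (∑ i, (μ i) ^ 2) = (∑ i, (μ' i) ^ 2) →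
      blockSoftRisk B τ μ = blockSoftRisk B τ μ' := by
    intro μ μ' h
    rw [blockSoftRisk_eq B hτ, blockSoftRisk_eq B hτ]
    refine gRisk_congr hτ ?_
    simp [EuclideanSpace.norm_eq, h]
  have hder : ∀ ξ : ℝ, 0 < ξ →
      HasDerivAt (blockSoftRiskSq B τ) (gHInt τ e (Real.sqrt ξ)) ξ := by
    intro ξ hξ
    have hs : 0 < Real.sqrt ξ := Real.sqrt_pos.2 hξ
    have h1 := hasDerivAt_gRisk hτ he (Real.sqrt ξ) (ae_norm_ne hB τ _)
    have h2 := h1.comp ξ (Real.hasDerivAt_sqrt hξ.ne')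
    rw [hG]
    refine h2.congr_deriv ?_
    field_simp
  have hcont : Continuous (blockSoftRiskSq B τ) := by
    have h1 : Continuous fun r : ℝ => gRisk τ (r • e) :=
      continuous_iff_continuousAt.2 fun r =>
        (hasDerivAt_gRisk hτ he r (ae_norm_ne hB τ _)).continuousAt
    rw [hG]
    exact h1.comp Real.continuous_sqrt
  have hdiff : DifferentiableOn ℝ (blockSoftRiskSq B τ) (interior (Set.Ici 0)) := by
    intro x hx
    rw [interior_Ici] at hx
    exact (hder x hx).differentiableAt.differentiableWithinAt
  have hmono : MonotoneOn (blockSoftRiskSq B τ) (Set.Ici 0) := by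
    refine monotoneOn_of_deriv_nonneg (convex_Ici 0) hcont.continuousOn hdiff ?_
    intro x hx
    rw [interior_Ici] at hx
    rw [(hder x hx).deriv]
    exact (gHInt_mem hτ he _).1
  have hlim : Tendsto (blockSoftRiskSq B τ) atTop (nhds ((B : ℝ) + τ ^ 2)) := by
    have h1 := (tendsto_gRisk hτ he).comp Real.tendsto_sqrt_atTop
    rw [hG]
    simpa [Function.comp_def] using h1
  refine ⟨hrot, ?_, hmono, ?_, ?_, hlim⟩
  · intro μ
    refine hrot _ _ ?_
    have h0 : 0 ≤ ∑ i, (μ i) ^ 2 := Finset.sum_nonneg fun i _ => sq_nonneg _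
    symm
    rw [Finset.sum_eq_single (⟨0, hB⟩ : Fin B)]
    · simp [Real.sq_sqrt h0]
    · intro b _ hb
      have : (b : ℕ) ≠ 0 := fun h => hb (Fin.ext h)
      simp [this]
    · simp
  · intro ξ hξ
    refine ⟨gHInt τ e (Real.sqrt ξ), ?_, gHInt_mem hτ he _⟩
    rcases hξ.eq_or_lt with h | h
    · subst h
      refine hasDerivWithinAt_Ici_of_tendsto_deriv (s := Set.Ioi 0) ?_
        hcont.continuousAt.continuousWithinAt self_mem_nhdsWithin ?_
      · intro x hx
        exact (hder x hx).differentiableAt.differentiableWithinAt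
      · have h1 : Tendsto (fun x : ℝ => gHInt τ e (Real.sqrt x)) (nhdsWithin 0 (Set.Ioi 0))
            (nhds (gHInt τ e (Real.sqrt 0))) := by
          have h2 := continuousAt_gHInt hτ he (Real.sqrt 0) (ae_norm_ne hB τ _)
          exact (h2.comp (f := Real.sqrt) Real.continuous_sqrt.continuousAt).tendsto.mono_left
            nhdsWithin_le_nhds
        refine h1.congr' ?_
        filter_upwards [self_mem_nhdsWithin] with x hx
        exact (hder x hx).deriv.symm
    · exact (hder ξ h).hasDerivWithinAt
  · intro ξ hξ
    refine le_min ?_ ?_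
    · have := (convex_Ici (0 : ℝ)).image_sub_le_mul_sub_of_deriv_le hcont.continuousOn hdiff
        (C := 1) (fun x hx => by
          rw [interior_Ici] at hx
          rw [(hder x hx).deriv]
          exact (gHInt_mem hτ he _).2) 0 Set.self_mem_Ici ξ hξ hξ
      linarith
    · refine ge_of_tendsto hlim ?_
      filter_upwards [eventually_ge_atTop ξ] with x hx
      exact hmono hξ (hξ.trans hx) hx
end
end
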